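/- arXiv:2601.10941 — 6 statements merged into one kernel-verified Lean document; each statement's English description precedes it below -/
import Mathlib

section
/- Under assumptions (I1)–(I4) and the additional assumption (I5) that there exist p > 2 and c_I > 0 with I(u) ≥ c_I ‖u‖_H^p for all u ∈ E, one has, for every λ ∈ (λ_n, λ_{n+1}), c_λ ≤ ((p−2)/(2 c_I^{2/(p−2)} p^{p/(p−2)})) · (λ_{n+1} − λ)^{p/(p−2)}. -/
open Filter Topology Set
open scoped InnerProductSpace

/- Abstract setting: `E = D(A^{1/2})` is a real Hilbert space in which the rescaled
eigenfunctions `ζ_k / √(1+λ_k)` form a Hilbert basis (encoded by `hON` and `hdense` below);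
the `H`-inner product of `u, v ∈ E` is recovered as `∑ₖ ⟨u,ζ_k⟩_H ⟨v,ζ_k⟩_H`, where
`⟨u,ζ_k⟩_H = ⟨u,ζ_k⟩_E / (1+λ_k)`. -/

variable {E : Type*} [NormedAddCommGroup E] [InnerProductSpace ℝ E] [CompleteSpace E]

/-- The `H`-inner-product coefficient `⟨u, ζ_k⟩_H = ⟨u, ζ_k⟩_E / (1 + λ_k)`. -/
noncomputable def coefH (lam : ℕ → ℝ) (ζ : ℕ → E) (u : E) (k : ℕ) : ℝ :=
  ⟪u, ζ k⟫_ℝ / (1 + lam k)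

/-- The square of the `H`-norm: `‖u‖_H² = ∑ₖ ⟨u,ζ_k⟩_H²`. -/
noncomputable def normHsq (lam : ℕ → ℝ) (ζ : ℕ → E) (u : E) : ℝ :=
  ∑' k, (coefH lam ζ u k) ^ 2

/-- The symmetric bilinear form `q_λ(u,v) = ∑ₖ (λ_k − λ) ⟨u,ζ_k⟩_H ⟨v,ζ_k⟩_H`. -/
noncomputable def qForm (lam : ℕ → ℝ) (ζ : ℕ → E) (lambda : ℝ) (u v : E) : ℝ :=
  ∑' k, (lam k - lambda) * (coefH lam ζ u k * coefH lam ζ v k)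

/-- The action functional `J_λ(u) = ½ q_λ(u) − I(u)`. -/
noncomputable def Jfun (lam : ℕ → ℝ) (ζ : ℕ → E) (I : E → ℝ) (lambda : ℝ) (u : E) : ℝ :=
  qForm lam ζ lambda u u / 2 - I u

/-- `E_n`, the span of the eigenfunctions `ζ_0, …, ζ_n` (the first `n+1` of them). -/
noncomputable def Esub (ζ : ℕ → E) (n : ℕ) : Submodule ℝ E :=
  Submodule.span ℝ (ζ '' {k : ℕ | k ≤ n})

/-- `F_n(u) = E_n ⊕ ℝ u`. -/
noncomputable def Fsub (ζ : ℕ → E) (n : ℕ) (u : E) : Submodule ℝ E :=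
  Esub ζ n ⊔ Submodule.span ℝ {u}

/-- `F_n(u)⁺ = E_n ⊕ ℝ⁺ u = {v + t u : v ∈ E_n, t > 0}`. -/
def FsubPlus (ζ : ℕ → E) (n : ℕ) (u : E) : Set E :=
  {w | ∃ v ∈ Esub ζ n, ∃ t : ℝ, 0 < t ∧ w = v + t • u}

/-- The derivative of `J_λ` at `u` applied to `w`: `J_λ'(u)[w] = q_λ(u,w) − I'(u)[w]`. -/
noncomputable def Jderiv (lam : ℕ → ℝ) (ζ : ℕ → E) (I' : E → E →L[ℝ] ℝ)
    (lambda : ℝ) (u w : E) : ℝ :=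
  qForm lam ζ lambda u w - I' u w

/-- The Nehari–Pankov set `NP_λ = {u ∈ E ∖ E_n : J_λ'(u)|_{F_n(u)} = 0}`. -/
def NehariPankov (lam : ℕ → ℝ) (ζ : ℕ → E) (I' : E → E →L[ℝ] ℝ)
    (n : ℕ) (lambda : ℝ) : Set E :=
  {u | u ∉ Esub ζ n ∧ ∀ w ∈ Fsub ζ n u, Jderiv lam ζ I' lambda u w = 0}

/-- The ground-state level `c_λ = inf_{NP_λ} J_λ`. -/
noncomputable def clevel (lam : ℕ → ℝ) (ζ : ℕ → E) (I : E → ℝ) (I' : E → E →L[ℝ] ℝ)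
    (n : ℕ) (lambda : ℝ) : ℝ :=
  sInf (Jfun lam ζ I lambda '' NehariPankov lam ζ I' n lambda)

/-- The set `Q_λ` of minimizers of `J_λ` on `NP_λ`. -/
def Qset (lam : ℕ → ℝ) (ζ : ℕ → E) (I : E → ℝ) (I' : E → E →L[ℝ] ℝ)
    (n : ℕ) (lambda : ℝ) : Set E :=
  {u | u ∈ NehariPankov lam ζ I' n lambda ∧
    Jfun lam ζ I lambda u = clevel lam ζ I I' n lambda}

/-- `E_n^⊥ = {w ∈ E : ⟨w, ζ_k⟩_H = 0 for k = 0, …, n}`. -/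
def EsubPerp (lam : ℕ → ℝ) (ζ : ℕ → E) (n : ℕ) : Set E :=
  {w | ∀ k ≤ n, coefH lam ζ w k = 0}

/-!
On the finite-dimensional space `E_{n+1}` the form `q_λ` is at most `(λ_{n+1} - λ) ‖·‖_H²`, so
(I5) gives `J_λ(u) ≤ ½ (λ_{n+1} - λ) r² - c_I r^p` with `r = ‖u‖_H`. Hence `J_λ` attains its maximum
over `E_{n+1}`. The maximum is positive because `I` is negligible against `q_λ` near `0` in the
direction of `ζ_{n+1}`, whereas `J_λ ≤ 0` on `E_n`; the maximiser is therefore a critical point of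
`J_λ` on `E_{n+1}` lying outside `E_n`, that is, a point of the Nehari–Pankov set. The stated
constant is a bound for the scalar function of `r`, obtained from Young's inequality. Finally
`J_λ = ½ I'(u)[u] - I(u) ≥ 0` on the Nehari–Pankov set, by the monotonicity in (I3), so the infimum
`c_λ` is a genuine one.
-/

/-- A system of eigenvectors `ζ k`, with eigenvalues `lam k`, normalised in `H`. Only the inner
product of `E` appears: since `⟨u, v⟩_E = ⟨u, v⟩_H + ⟨A u, v⟩_H`, the vector `ζ k` has squared
`E`-norm `1 + lam k`. -/
structure IsEigensystem (lam : ℕ → ℝ) (ζ : ℕ → E) : Prop where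
  inner_eq : ∀ j k, ⟪ζ j, ζ k⟫_ℝ = if j = k then 1 + lam k else 0
  one_add_pos : ∀ k, 0 < 1 + lam k

section Scalar

variable {p c d r : ℝ}

lemma mul_sq_sub_mul_rpow_le (hp : 2 < p) (hc : 0 < c) (hd : 0 ≤ d) (hr : 0 ≤ r) :
    d / 2 * r ^ 2 - c * r ^ p ≤
      (p - 2) / (2 * c ^ (2 / (p - 2)) * p ^ (p / (p - 2))) * d ^ (p / (p - 2)) := by
  have hp0 : 0 < p := by linarith
  have hp2 : 0 < p - 2 := by linarith
  have hconj : (p / 2).HolderConjugate (p / (p - 2)) :=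
    Real.holderConjugate_iff.2 ⟨by linarith, by field_simp; ring⟩
  -- The scale `K` makes the first term of Young's inequality equal to `c * r ^ p`.
  obtain ⟨K, hK⟩ : ∃ K, K = (c * p / 2) ^ (2 / p) := ⟨_, rfl⟩
  have hK0 : 0 < K := hK ▸ by positivity
  have first_term : (K * r ^ 2) ^ (p / 2) / (p / 2) = c * r ^ p := by
    have hKp : K ^ (p / 2) = c * p / 2 := by
      rw [hK, ← Real.rpow_mul (by positivity), show 2 / p * (p / 2) = 1 by field_simp,
        Real.rpow_one]
    have hrp : (r ^ 2) ^ (p / 2) = r ^ p := by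
      rw [← Real.rpow_natCast_mul hr, show ((2 : ℕ) : ℝ) * (p / 2) = p by push_cast; ring]
    rw [Real.mul_rpow hK0.le (by positivity), hKp, hrp]
    field_simp
  have second_term : (d / (2 * K)) ^ (p / (p - 2)) / (p / (p - 2)) =
      (p - 2) / (2 * c ^ (2 / (p - 2)) * p ^ (p / (p - 2))) * d ^ (p / (p - 2)) := by
    have hexp : p / (p - 2) = 1 + 2 / (p - 2) := by field_simp; ring
    have hKq : K ^ (p / (p - 2)) =
        c ^ (2 / (p - 2)) * p ^ (2 / (p - 2)) / 2 ^ (2 / (p - 2)) := by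
      rw [hK, ← Real.rpow_mul (by positivity), show 2 / p * (p / (p - 2)) = 2 / (p - 2) by
        field_simp, Real.div_rpow (by positivity) two_pos.le, Real.mul_rpow hc.le hp0.le]
    have hsplit : ∀ x : ℝ, 0 < x → x ^ (p / (p - 2)) = x * x ^ (2 / (p - 2)) := fun x hx => by
      rw [hexp, Real.rpow_add hx, Real.rpow_one]
    rw [Real.div_rpow hd (by positivity), Real.mul_rpow two_pos.le hK0.le, hKq,
      hsplit 2 two_pos, hsplit p hp0]
    field_simp
  have young : K * r ^ 2 * (d / (2 * K)) ≤ c * r ^ p +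
      (p - 2) / (2 * c ^ (2 / (p - 2)) * p ^ (p / (p - 2))) * d ^ (p / (p - 2)) := by
    rw [← first_term, ← second_term]
    exact Real.young_inequality_of_nonneg (by positivity) (by positivity) hconj
  have : K * r ^ 2 * (d / (2 * K)) = d / 2 * r ^ 2 := by field_simp
  linarith

lemma tendsto_mul_sq_sub_mul_rpow_atBot (hp : 2 < p) (hc : 0 < c) :
    Tendsto (fun r : ℝ => d / 2 * r ^ 2 - c * r ^ p) atTop atBot := by
  have hfactor : ∀ᶠ r : ℝ in atTop,
      r ^ 2 * (d / 2 - c * r ^ (p - 2)) = d / 2 * r ^ 2 - c * r ^ p := by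
    filter_upwards [eventually_gt_atTop 0] with r hr
    rw [Real.rpow_sub hr, Real.rpow_two]
    field_simp
  have hpow : Tendsto (fun r : ℝ => c * r ^ (p - 2)) atTop atTop :=
    (tendsto_rpow_atTop (sub_pos.2 hp)).const_mul_atTop hc
  refine Tendsto.congr' hfactor ((tendsto_pow_atTop two_ne_zero).atTop_mul_atBot₀ ?_)
  exact (tendsto_atBot_add_const_left atTop (d / 2)
    (tendsto_neg_atTop_atBot.comp hpow)).congr fun _ => (sub_eq_add_neg _ _).symm

end Scalar

section Energy

omit [CompleteSpace E]

variable {lam : ℕ → ℝ} {ζ : ℕ → E} {m n k : ℕ} {u w : E} {l : ℝ}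

lemma coefH_add (u v : E) (k : ℕ) :
    coefH lam ζ (u + v) k = coefH lam ζ u k + coefH lam ζ v k := by
  simp only [coefH, inner_add_left, add_div]

lemma coefH_smul (t : ℝ) (u : E) (k : ℕ) :
    coefH lam ζ (t • u) k = t * coefH lam ζ u k := by
  simp only [coefH, real_inner_smul_left, mul_div_assoc]

@[fun_prop]
lemma continuous_coefH (k : ℕ) : Continuous fun u => coefH lam ζ u k := by
  unfold coefH
  fun_prop

lemma normHsq_nonneg (u : E) : 0 ≤ normHsq lam ζ u :=
  tsum_nonneg fun _ => sq_nonneg _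

lemma qForm_smul_self (t : ℝ) (u : E) :
    qForm lam ζ l (t • u) (t • u) = t ^ 2 * qForm lam ζ l u u := by
  simp only [qForm, coefH_smul, ← tsum_mul_left]
  exact tsum_congr fun k => by ring

lemma mem_Esub (hk : k ≤ m) : ζ k ∈ Esub ζ m :=
  Submodule.subset_span (mem_image_of_mem ζ hk)

lemma Esub_mono (ζ : ℕ → E) : Monotone (Esub ζ) := fun _ _ hmn =>
  Submodule.span_mono (image_mono fun _ hk => le_trans hk hmn)

instance finiteDimensional_Esub (ζ : ℕ → E) (m : ℕ) : FiniteDimensional ℝ (Esub ζ m) :=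
  FiniteDimensional.span_of_finite ℝ ((finite_le_nat m).image ζ)

lemma Fsub_le_Esub (hnm : n ≤ m) (hu : u ∈ Esub ζ m) : Fsub ζ n u ≤ Esub ζ m :=
  sup_le (Esub_mono ζ hnm) ((Submodule.span_singleton_le_iff_mem u _).2 hu)

namespace IsEigensystem

lemma coefH_eigenvector (hζ : IsEigensystem lam ζ) (j k : ℕ) :
    coefH lam ζ (ζ j) k = if j = k then 1 else 0 := by
  rw [coefH, hζ.inner_eq, ite_div, div_self (hζ.one_add_pos k).ne', zero_div]

lemma qForm_eigenvector (hζ : IsEigensystem lam ζ) (l : ℝ) (m : ℕ) :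
    qForm lam ζ l (ζ m) (ζ m) = lam m - l := by
  rw [qForm, tsum_eq_single m fun k hk => by simp [hζ.coefH_eigenvector, hk.symm]]
  simp [hζ.coefH_eigenvector]

lemma eigenvector_ne_zero (hζ : IsEigensystem lam ζ) (m : ℕ) : ζ m ≠ 0 := by
  rw [← inner_self_ne_zero (𝕜 := ℝ), hζ.inner_eq, if_pos rfl]
  exact (hζ.one_add_pos m).ne'

lemma sum_coefH_smul (hζ : IsEigensystem lam ζ) (hu : u ∈ Esub ζ m) :
    ∑ k ∈ Finset.range (m + 1), coefH lam ζ u k • ζ k = u := by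
  induction hu using Submodule.span_induction with
  | mem x hx =>
    obtain ⟨j, hj : j ≤ m, rfl⟩ := hx
    simp [hζ.coefH_eigenvector, Nat.lt_succ_of_le hj]
  | zero => simp [coefH]
  | add x y _ _ hx hy => simp only [coefH_add, add_smul, Finset.sum_add_distrib, hx, hy]
  | smul t x _ hx => simp only [coefH_smul, mul_smul, ← Finset.smul_sum, hx]

lemma coefH_eq_zero (hζ : IsEigensystem lam ζ) (hu : u ∈ Esub ζ m) (hk : m < k) :
    coefH lam ζ u k = 0 := by
  have hle : Esub ζ m ≤ (ℝ ∙ ζ k)ᗮ := Submodule.span_le.2 <| by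
    rintro _ ⟨j, hj : j ≤ m, rfl⟩
    rw [SetLike.mem_coe, Submodule.mem_orthogonal_singleton_iff_inner_left, hζ.inner_eq,
      if_neg (by lia)]
  rw [coefH, Submodule.mem_orthogonal_singleton_iff_inner_left.1 (hle hu), zero_div]

lemma normHsq_eq_sum (hζ : IsEigensystem lam ζ) (hu : u ∈ Esub ζ m) :
    normHsq lam ζ u = ∑ k ∈ Finset.range (m + 1), coefH lam ζ u k ^ 2 :=
  tsum_eq_sum fun k hk => by
    rw [hζ.coefH_eq_zero hu (by simpa using hk), zero_pow two_ne_zero]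

lemma qForm_eq_sum (hζ : IsEigensystem lam ζ) (hu : u ∈ Esub ζ m) (v : E) :
    qForm lam ζ l u v =
      ∑ k ∈ Finset.range (m + 1), (lam k - l) * (coefH lam ζ u k * coefH lam ζ v k) :=
  tsum_eq_sum fun k hk => by
    rw [hζ.coefH_eq_zero hu (by simpa using hk), zero_mul, mul_zero]

lemma qForm_neg_one_self (hζ : IsEigensystem lam ζ) (hu : u ∈ Esub ζ m) :
    qForm lam ζ (-1) u u = ‖u‖ ^ 2 := by
  have hinner : ∀ k, ⟪u, ζ k⟫_ℝ = (lam k - -1) * coefH lam ζ u k := fun k => by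
    rw [coefH, sub_neg_eq_add, add_comm, mul_div_cancel₀ _ (hζ.one_add_pos k).ne']
  calc qForm lam ζ (-1) u u
      = ∑ k ∈ Finset.range (m + 1), coefH lam ζ u k * ⟪u, ζ k⟫_ℝ := by
        rw [hζ.qForm_eq_sum hu]
        exact Finset.sum_congr rfl fun k _ => by rw [hinner]; ring
    _ = ⟪u, ∑ k ∈ Finset.range (m + 1), coefH lam ζ u k • ζ k⟫_ℝ := by
        simp only [inner_sum, real_inner_smul_right]
    _ = ‖u‖ ^ 2 := by rw [hζ.sum_coefH_smul hu, real_inner_self_eq_norm_sq]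

lemma qForm_self_le (hζ : IsEigensystem lam ζ) (hmono : Monotone lam) (hu : u ∈ Esub ζ m) :
    qForm lam ζ l u u ≤ (lam m - l) * normHsq lam ζ u := by
  rw [hζ.qForm_eq_sum hu, hζ.normHsq_eq_sum hu, Finset.mul_sum]
  refine Finset.sum_le_sum fun k hk => ?_
  have hkm : lam k ≤ lam m := hmono (Finset.mem_range_succ_iff.1 hk)
  rw [← sq]
  gcongr

lemma qForm_add_smul_self (hζ : IsEigensystem lam ζ) (hu : u ∈ Esub ζ m) (hw : w ∈ Esub ζ m)
    (t : ℝ) :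
    qForm lam ζ l (u + t • w) (u + t • w) =
      qForm lam ζ l u u + 2 * t * qForm lam ζ l u w + t ^ 2 * qForm lam ζ l w w := by
  rw [hζ.qForm_eq_sum (add_mem hu (Submodule.smul_mem _ t hw)), hζ.qForm_eq_sum hu,
    hζ.qForm_eq_sum hu, hζ.qForm_eq_sum hw]
  simp only [coefH_add, coefH_smul, Finset.mul_sum, ← Finset.sum_add_distrib]
  exact Finset.sum_congr rfl fun k _ => by ring

lemma tendsto_sqrt_normHsq_cocompact (hζ : IsEigensystem lam ζ) (hmono : Monotone lam) (m : ℕ) :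
    Tendsto (fun u : Esub ζ m => √(normHsq lam ζ u)) (cocompact (Esub ζ m)) atTop := by
  have hnorm : ∀ u : Esub ζ m, ‖u‖ ≤ √(1 + lam m) * √(normHsq lam ζ u) := fun u => by
    rw [← Real.sqrt_mul (hζ.one_add_pos m).le]
    refine Real.le_sqrt_of_sq_le ?_
    calc ‖u‖ ^ 2 = qForm lam ζ (-1) u u := (hζ.qForm_neg_one_self u.2).symm
      _ ≤ (lam m - -1) * normHsq lam ζ u := hζ.qForm_self_le hmono u.2
      _ = (1 + lam m) * normHsq lam ζ u := by ring
  rw [← tendsto_const_mul_atTop_of_pos (Real.sqrt_pos.2 (hζ.one_add_pos m))]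
  exact tendsto_atTop_mono hnorm tendsto_norm_cocompact_atTop

end IsEigensystem

variable {I : E → ℝ} {I' : E → E →L[ℝ] ℝ} {p c : ℝ}

lemma exists_Jfun_smul_pos (hq : 0 < qForm lam ζ l u u)
    (hI : Tendsto (fun t : ℝ => I (t • u) / t ^ 2) (𝓝[>] 0) (𝓝 0)) :
    ∃ t : ℝ, 0 < Jfun lam ζ I l (t • u) := by
  obtain ⟨t, hlt, ht : 0 < t⟩ :=
    ((hI.eventually_lt_const (half_pos hq)).and self_mem_nhdsWithin).exists
  refine ⟨t, ?_⟩
  rw [div_lt_iff₀ (by positivity)] at hlt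
  rw [Jfun, qForm_smul_self]
  linarith

lemma IsEigensystem.Jfun_le (hζ : IsEigensystem lam ζ) (hmono : Monotone lam)
    (hI : c * √(normHsq lam ζ u) ^ p ≤ I u) (hu : u ∈ Esub ζ m) :
    Jfun lam ζ I l u ≤
      (lam m - l) / 2 * √(normHsq lam ζ u) ^ 2 - c * √(normHsq lam ζ u) ^ p := by
  have hq := hζ.qForm_self_le (l := l) hmono hu
  rw [Jfun, Real.sq_sqrt (normHsq_nonneg u)]
  linarith

lemma IsEigensystem.Jfun_nonpos (hζ : IsEigensystem lam ζ) (hmono : Monotone lam)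
    (hI : 0 ≤ I u) (hl : lam m ≤ l) (hu : u ∈ Esub ζ m) : Jfun lam ζ I l u ≤ 0 := by
  have hq : qForm lam ζ l u u ≤ 0 := (hζ.qForm_self_le hmono hu).trans
    (mul_nonpos_of_nonpos_of_nonneg (sub_nonpos.2 hl) (normHsq_nonneg u))
  rw [Jfun]
  linarith

lemma IsEigensystem.continuous_Jfun_restrict (hζ : IsEigensystem lam ζ) (hI : Continuous I)
    (l : ℝ) (m : ℕ) : Continuous fun u : Esub ζ m => Jfun lam ζ I l u := by
  have hsum : ∀ u : Esub ζ m, Jfun lam ζ I l u = (∑ k ∈ Finset.range (m + 1),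
      (lam k - l) * (coefH lam ζ u k * coefH lam ζ u k)) / 2 - I u := fun u => by
    rw [Jfun, hζ.qForm_eq_sum u.2]
  simp only [hsum]
  fun_prop

lemma IsEigensystem.exists_forall_Jfun_le (hζ : IsEigensystem lam ζ) (hmono : Monotone lam)
    (hI : Continuous I) (hp : 2 < p) (hc : 0 < c)
    (hI5 : ∀ u, c * √(normHsq lam ζ u) ^ p ≤ I u) (l : ℝ) (m : ℕ) :
    ∃ u ∈ Esub ζ m, ∀ w ∈ Esub ζ m, Jfun lam ζ I l w ≤ Jfun lam ζ I l u := by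
  have hlim : Tendsto (fun u : Esub ζ m => Jfun lam ζ I l u) (cocompact _) atBot :=
    tendsto_atBot_mono (fun u => hζ.Jfun_le hmono (hI5 u) u.2)
      ((tendsto_mul_sq_sub_mul_rpow_atBot hp hc).comp (hζ.tendsto_sqrt_normHsq_cocompact hmono m))
  obtain ⟨u, hu⟩ := (hζ.continuous_Jfun_restrict hI l m).exists_forall_ge hlim
  exact ⟨u, u.2, fun w hw => hu ⟨w, hw⟩⟩

lemma IsEigensystem.hasDerivAt_Jfun (hζ : IsEigensystem lam ζ) (hI : HasFDerivAt I (I' u) u)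
    (hu : u ∈ Esub ζ m) (hw : w ∈ Esub ζ m) :
    HasDerivAt (fun t : ℝ => Jfun lam ζ I l (u + t • w)) (Jderiv lam ζ I' l u w) 0 := by
  have hline : HasDerivAt (fun t : ℝ => u + t • w) w 0 := by
    simpa using ((hasDerivAt_id (0 : ℝ)).smul_const w).const_add u
  have hIline : HasDerivAt (fun t : ℝ => I (u + t • w)) (I' u w) 0 :=
    HasFDerivAt.comp_hasDerivAt (f := fun t : ℝ => u + t • w) 0 (by simpa using hI) hline
  have hquad : HasDerivAt (fun t : ℝ => qForm lam ζ l (u + t • w) (u + t • w) / 2)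
      (qForm lam ζ l u w) 0 := by
    simp only [hζ.qForm_add_smul_self hu hw]
    have hlin := ((hasDerivAt_id (0 : ℝ)).const_mul 2).mul_const (qForm lam ζ l u w)
    have hsq := (hasDerivAt_pow 2 (0 : ℝ)).mul_const (qForm lam ζ l w w)
    exact (((hlin.const_add (qForm lam ζ l u u)).add hsq).div_const 2).congr_deriv (by simp)
  exact hquad.sub hIline

lemma IsEigensystem.mem_NehariPankov (hζ : IsEigensystem lam ζ) (hI : HasFDerivAt I (I' u) u)
    (hnm : n ≤ m) (hu : u ∈ Esub ζ m) (hun : u ∉ Esub ζ n)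
    (hmax : ∀ w ∈ Esub ζ m, Jfun lam ζ I l w ≤ Jfun lam ζ I l u) :
    u ∈ NehariPankov lam ζ I' n l := by
  refine ⟨hun, fun w hw => ?_⟩
  have hwm : w ∈ Esub ζ m := Fsub_le_Esub hnm hu hw
  refine IsLocalMax.hasDerivAt_eq_zero (Eventually.of_forall fun t => ?_)
    (hζ.hasDerivAt_Jfun hI hu hwm)
  simpa using hmax _ (add_mem hu (Submodule.smul_mem _ t hwm))

lemma two_mul_le_apply_self_of_monotoneOn {f : E →L[ℝ] ℝ} (hI : HasFDerivAt I f u)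
    (hmono : MonotoneOn (fun t : ℝ => I (t • u) / t ^ 2) (Ioi 0)) : 2 * I u ≤ f u := by
  have hray : HasDerivAt (fun t : ℝ => I (t • u)) (f u) 1 :=
    HasFDerivAt.comp_hasDerivAt (f := fun t : ℝ => t • u) 1 (by simpa using hI)
      (by simpa using (hasDerivAt_id (1 : ℝ)).smul_const u)
  have hquot : HasDerivAt (fun t : ℝ => I (t • u) / t ^ 2) (f u - 2 * I u) 1 :=
    (hray.fun_div (hasDerivAt_pow 2 1) (by simp)).congr_deriv (by simp; ring)
  have hnonneg : 0 ≤ derivWithin (fun t : ℝ => I (t • u) / t ^ 2) (Ioi 0) 1 :=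
    hmono.derivWithin_nonneg
  rw [hquot.hasDerivWithinAt.derivWithin (uniqueDiffOn_Ioi 0 1 (mem_Ioi.2 one_pos))] at hnonneg
  linarith

lemma Jfun_nonneg_of_mem_NehariPankov (hI : 2 * I u ≤ I' u u)
    (hu : u ∈ NehariPankov lam ζ I' n l) : 0 ≤ Jfun lam ζ I l u := by
  have hderiv := hu.2 u (Submodule.mem_sup_right (Submodule.mem_span_singleton_self u))
  rw [Jderiv] at hderiv
  rw [Jfun]
  linarith

lemma bddBelow_Jfun_image_NehariPankov (hIderiv : ∀ u, HasFDerivAt I (I' u) u)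
    (hI3mono : ∀ u : E, u ≠ 0 → MonotoneOn (fun t : ℝ => I (t • u) / t ^ 2) (Ioi 0)) :
    BddBelow (Jfun lam ζ I l '' NehariPankov lam ζ I' n l) := by
  refine ⟨0, forall_mem_image.2 fun u hu => Jfun_nonneg_of_mem_NehariPankov ?_ hu⟩
  have hu0 : u ≠ 0 := fun h => hu.1 (h ▸ zero_mem _)
  exact two_mul_le_apply_self_of_monotoneOn (hIderiv u) (hI3mono u hu0)

theorem clevel_upper_bound_of_I5_general (hζ : IsEigensystem lam ζ) (hlam_mono : Monotone lam)
    (hIderiv : ∀ u, HasFDerivAt I (I' u) u)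
    (hI3mono : ∀ u : E, u ≠ 0 → MonotoneOn (fun t : ℝ => I (t • u) / t ^ 2) (Ioi 0))
    (hI3zero : ∀ u : E, u ≠ 0 → Tendsto (fun t : ℝ => I (t • u) / t ^ 2) (𝓝[>] 0) (𝓝 0))
    (hp : 2 < p) (hc : 0 < c) (hI5 : ∀ u, c * √(normHsq lam ζ u) ^ p ≤ I u)
    (hl : l ∈ Ico (lam n) (lam (n + 1))) :
    clevel lam ζ I I' n l ≤
      (p - 2) / (2 * c ^ (2 / (p - 2)) * p ^ (p / (p - 2))) *
        (lam (n + 1) - l) ^ (p / (p - 2)) := by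
  have hI_cont : Continuous I := continuous_iff_continuousAt.2 fun u => (hIderiv u).continuousAt
  have hI_nonneg : ∀ u, 0 ≤ I u := fun u => le_trans (by positivity) (hI5 u)
  obtain ⟨u, hu, hmax⟩ := hζ.exists_forall_Jfun_le hlam_mono hI_cont hp hc hI5 l (n + 1)
  obtain ⟨t, ht⟩ := exists_Jfun_smul_pos
    ((sub_pos.2 hl.2).trans_eq (hζ.qForm_eigenvector l (n + 1)).symm)
    (hI3zero _ (hζ.eigenvector_ne_zero (n + 1)))
  have hpos : 0 < Jfun lam ζ I l u :=
    ht.trans_le (hmax _ (Submodule.smul_mem _ t (mem_Esub le_rfl)))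
  have hun : u ∉ Esub ζ n := fun h =>
    hpos.not_ge (hζ.Jfun_nonpos hlam_mono (hI_nonneg u) hl.1 h)
  have hNP : u ∈ NehariPankov lam ζ I' n l :=
    hζ.mem_NehariPankov (hIderiv u) n.le_succ hu hun hmax
  calc clevel lam ζ I I' n l
      ≤ Jfun lam ζ I l u :=
        csInf_le (bddBelow_Jfun_image_NehariPankov hIderiv hI3mono) (mem_image_of_mem _ hNP)
    _ ≤ (lam (n + 1) - l) / 2 * √(normHsq lam ζ u) ^ 2 - c * √(normHsq lam ζ u) ^ p :=
        hζ.Jfun_le hlam_mono (hI5 u) hu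
    _ ≤ _ := mul_sq_sub_mul_rpow_le hp hc (sub_pos.2 hl.2).le (Real.sqrt_nonneg _)

end Energy

/-- Under the additional lower bound (I5), `I(u) ≥ c_I ‖u‖_H^p`, one has
`c_λ ≤ ((p−2) / (2 c_I^{2/(p−2)} p^{p/(p−2)})) (λ_{n+1} − λ)^{p/(p−2)}`. -/
theorem clevel_upper_bound_of_I5 {E : Type*} [NormedAddCommGroup E]
    [InnerProductSpace ℝ E] [CompleteSpace E]
    (lam : ℕ → ℝ) (ζ : ℕ → E)
    (hlam_mono : Monotone lam) (hlam_nonneg : ∀ k, 0 ≤ lam k)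
    (hlam_top : Tendsto lam atTop atTop)
    (hON : ∀ j k, ⟪ζ j, ζ k⟫_ℝ = if j = k then 1 + lam k else 0)
    (hdense : (Submodule.span ℝ (Set.range ζ)).topologicalClosure = ⊤)
    (I : E → ℝ) (I' : E → E →L[ℝ] ℝ)
    (hIderiv : ∀ u, HasFDerivAt I (I' u) u) (hIderiv_cont : Continuous I')
    (hI1 : ∀ (u : ℕ → E) (a : E),
      (∀ φ : E →L[ℝ] ℝ, Tendsto (fun j => φ (u j)) atTop (𝓝 (φ a))) →
      Tendsto (fun j => I (u j)) atTop (𝓝 (I a)))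
    (hI2 : I 0 = 0 ∧ ∀ u : E, u ≠ 0 → 0 < I u)
    (hI3mono : ∀ u : E, u ≠ 0 → MonotoneOn (fun t : ℝ => I (t • u) / t ^ 2) (Ioi 0))
    (hI3zero : ∀ u : E, u ≠ 0 → Tendsto (fun t : ℝ => I (t • u) / t ^ 2) (𝓝[>] 0) (𝓝 0))
    (hI3top : ∀ u : E, u ≠ 0 → Tendsto (fun t : ℝ => I (t • u) / t ^ 2) atTop atTop)
    (hI4 : ∀ u : E, u ≠ 0 → ∀ v : E, ∀ s : ℝ, -1 ≤ s →
      I u - I ((1 + s) • u + v) + I' u ((s * (s / 2 + 1)) • u + (1 + s) • v) ≤ 0)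
    (hI4strict : ∀ u : E, u ≠ 0 → ∀ s : ℝ, -1 ≤ s → s ≠ 0 →
      I u - I ((1 + s) • u) + I' u ((s * (s / 2 + 1)) • u) < 0)
    (n : ℕ)
    (hgap : lam n < lam (n + 1))
    (p cI : ℝ) (hp : 2 < p) (hcI : 0 < cI)
    (hI5 : ∀ u : E, cI * Real.sqrt (normHsq lam ζ u) ^ p ≤ I u) :
    ∀ lambda ∈ Ioo (lam n) (lam (n + 1)),
      clevel lam ζ I I' n lambda ≤
        (p - 2) / (2 * cI ^ (2 / (p - 2)) * p ^ (p / (p - 2))) *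
          (lam (n + 1) - lambda) ^ (p / (p - 2)) := by
  exact fun _ hl => clevel_upper_bound_of_I5_general
    ⟨hON, fun k => by linarith [hlam_nonneg k]⟩ hlam_mono hIderiv hI3mono hI3zero hp hcI hI5
    (Ioo_subset_Ico_self hl)
end

section
/- Let f : ℝ → ℝ be continuous and satisfy (f1). Then: (1) f(u) > 0 for u > 0 and f(u) < 0 for u < 0; (2) F is decreasing on (−∞, 0] and increasing on [0, +∞); (3) for every u ∈ ℝ∖{0}, the function t ↦ F(tu)/t² is nondecreasing on (0, +∞), tends to 0 as t → 0⁺, and tends to +∞ as t → +∞. -/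
open Filter Topology Set MeasureTheory

/-- Assumption (f1): `s ↦ f(s)/|s|` is strictly increasing on `ℝ ∖ {0}`, tends to `0`
as `s → 0`, to `+∞` as `s → +∞` and to `−∞` as `s → −∞`. -/
def F1Cond (f : ℝ → ℝ) : Prop :=
  StrictMonoOn (fun s => f s / |s|) {s : ℝ | s ≠ 0} ∧
  Tendsto (fun s => f s / |s|) (𝓝[≠] (0 : ℝ)) (𝓝 0) ∧
  Tendsto (fun s => f s / |s|) atTop atTop ∧
  Tendsto (fun s => f s / |s|) atBot atBot

/-- The primitive `F(s) = ∫₀ˢ f(t) dt`. -/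
noncomputable def Fprim (f : ℝ → ℝ) (s : ℝ) : ℝ := ∫ t in (0 : ℝ)..s, f t

/-- The potential `V_λ(s) = F(s) + (λ/2) s²` of the ODE `−u″ = λu + f(u)`. -/
noncomputable def Vpot (f : ℝ → ℝ) (lambda s : ℝ) : ℝ := Fprim f s + lambda / 2 * s ^ 2

/-!
For `u ≠ 0` the rescaled function `x ↦ u * f (x * u)` again satisfies (f1), and its primitive is
`t ↦ F (t * u)`. Hence only `u = 1`, that is, `F` on the positive half-line, has to be studied; the
negative half-line is the case `u = -1`. For `t > 0`, `f t / t` increases from its limit `0` at `0`,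
so `f` is positive and nondecreasing, in particular integrable on `(0, t]`, and

`F t / t ^ 2 = ∫ s in 0..1, f (t * s) / t`  and  `(t / 2) * f (t / 2) ≤ F t ≤ t * f t`;

the first shows that `F t / t ^ 2` inherits monotonicity from `f t / t`, and the second that it
inherits the limits of `f t / t` at `0` and at `∞`.
-/

theorem lt_of_strictMonoOn_Ioi_of_tendsto {α β : Type*} [LinearOrder α] [DenselyOrdered α]
    [TopologicalSpace α] [OrderTopology α] [Preorder β] [TopologicalSpace β] [OrderClosedTopology β]
    {g : α → β} {a x : α} {b : β} (hg : StrictMonoOn g (Ioi a)) (hlim : Tendsto g (𝓝[>] a) (𝓝 b))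
    (hx : a < x) : b < g x := by
  obtain ⟨y, hay, hyx⟩ := exists_between hx
  have : (𝓝[>] a).NeBot := nhdsGT_neBot_of_exists_gt ⟨x, hx⟩
  have hby : b ≤ g y := by
    refine le_of_tendsto hlim ?_
    filter_upwards [Ioo_mem_nhdsGT hay] with z hz
    exact (hg hz.1 hay hz.2).le
  exact hby.trans_lt (hg hay hx hyx)

section HalfLine

variable {k : ℝ → ℝ}

theorem integrableOn_Ioc_of_monotoneOn {μ : Measure ℝ} [IsLocallyFiniteMeasure μ] {a b c : ℝ}
    (hk : MonotoneOn k (Ioc a b)) (hc : ∀ x ∈ Ioc a b, c ≤ k x) : IntegrableOn k (Ioc a b) μ := by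
  refine IntegrableOn.of_bound measure_Ioc_lt_top
    (aemeasurable_restrict_of_monotoneOn measurableSet_Ioc hk).aestronglyMeasurable
    (max |c| |k b|) ?_
  filter_upwards [ae_restrict_mem measurableSet_Ioc] with x hx
  exact abs_le_max_abs_abs (hc x hx) (hk hx ⟨hx.1.trans_le hx.2, le_rfl⟩ hx.2)

theorem intervalIntegrable_of_monotoneOn_Ioi {μ : Measure ℝ} [IsLocallyFiniteMeasure μ]
    {a b c : ℝ} (hk : MonotoneOn k (Ioi a)) (hc : ∀ x ∈ Ioi a, c ≤ k x) (hab : a ≤ b) :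
    IntervalIntegrable k μ a b :=
  (intervalIntegrable_iff_integrableOn_Ioc_of_le hab).2 <|
    integrableOn_Ioc_of_monotoneOn (hk.mono Ioc_subset_Ioi_self) fun x hx => hc x hx.1

theorem monotoneOn_of_monotoneOn_div_self (hk₀ : ∀ x ∈ Ioi 0, 0 ≤ k x)
    (hk : MonotoneOn (fun x => k x / x) (Ioi 0)) : MonotoneOn k (Ioi 0) :=
  (hk.mul monotoneOn_id (fun x hx => div_nonneg (hk₀ x hx) (le_of_lt hx))
    fun _ hx => le_of_lt hx).congr fun x hx => div_mul_cancel₀ (k x) (ne_of_gt hx)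

theorem integral_le_Fprim_of_nonneg (hk₀ : ∀ x ∈ Ioi 0, 0 ≤ k x) {a b c : ℝ}
    (hint : IntervalIntegrable k volume 0 c) (ha : 0 ≤ a) (hab : a ≤ b) (hbc : b ≤ c) :
    ∫ x in a..b, k x ≤ Fprim k c := by
  refine intervalIntegral.integral_mono_interval ha hab hbc ?_ hint
  filter_upwards [ae_restrict_mem measurableSet_Ioc] with x hx
  exact hk₀ x hx.1

theorem monotoneOn_Fprim_of_nonneg (hint : ∀ b, 0 ≤ b → IntervalIntegrable k volume 0 b)
    (hk₀ : ∀ x ∈ Ioi 0, 0 ≤ k x) : MonotoneOn (Fprim k) (Ici 0) :=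
  fun _ ha b hb hab => integral_le_Fprim_of_nonneg hk₀ (hint b hb) le_rfl ha hab

theorem Fprim_div_sq_eq_integral {t : ℝ} (ht : t ≠ 0) :
    Fprim k t / t ^ 2 = ∫ s in (0 : ℝ)..1, k (t * s) / t := by
  rw [intervalIntegral.integral_div, intervalIntegral.integral_comp_mul_left k ht, mul_zero,
    mul_one, smul_eq_mul, Fprim]
  field_simp

theorem monotoneOn_Fprim_div_sq (hint : ∀ b, 0 ≤ b → IntervalIntegrable k volume 0 b)
    (hk : MonotoneOn (fun x => k x / x) (Ioi 0)) :
    MonotoneOn (fun t => Fprim k t / t ^ 2) (Ioi 0) := by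
  have hint' : ∀ t ∈ Ioi (0 : ℝ), IntervalIntegrable (fun s => k (t * s) / t) volume 0 1 := by
    intro t ht
    simpa only [zero_div, div_self (mem_Ioi.1 ht).ne'] using
      ((hint t (le_of_lt ht)).comp_mul_left (c := t)).div_const t
  intro a ha b hb hab
  simp only [Fprim_div_sq_eq_integral (ne_of_gt ha), Fprim_div_sq_eq_integral (ne_of_gt hb)]
  refine intervalIntegral.integral_mono_on_of_le_Ioo zero_le_one (hint' a ha) (hint' b hb) ?_
  intro s hs
  have hslope : ∀ t, k (t * s) / t = k (t * s) / (t * s) * s := fun t => by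
    rw [div_mul_eq_mul_div, mul_div_mul_right _ _ hs.1.ne']
  rw [hslope a, hslope b]
  exact mul_le_mul_of_nonneg_right
    (hk (mul_pos ha hs.1) (mul_pos hb hs.1) (mul_le_mul_of_nonneg_right hab hs.1.le)) hs.1.le

theorem Fprim_le_mul {t : ℝ} (hint : IntervalIntegrable k volume 0 t)
    (hk : MonotoneOn k (Ioc 0 t)) (ht : 0 ≤ t) : Fprim k t ≤ t * k t :=
  calc
    Fprim k t ≤ ∫ _ in (0 : ℝ)..t, k t :=
      intervalIntegral.integral_mono_on_of_le_Ioo ht hint intervalIntegrable_const fun _ hx =>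
        hk (Ioo_subset_Ioc_self hx) ⟨hx.1.trans hx.2, le_rfl⟩ hx.2.le
    _ = t * k t := by rw [intervalIntegral.integral_const, sub_zero, smul_eq_mul]

theorem sub_mul_le_Fprim (hk₀ : ∀ x ∈ Ioi 0, 0 ≤ k x) (hk : MonotoneOn k (Ioi 0)) {a b : ℝ}
    (ha : 0 < a) (hab : a ≤ b) : (b - a) * k a ≤ Fprim k b := by
  have hint : IntervalIntegrable k volume 0 b :=
    intervalIntegrable_of_monotoneOn_Ioi hk hk₀ (ha.le.trans hab)
  have hint' : IntervalIntegrable k volume a b :=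
    hint.mono_set (uIcc_subset_uIcc_right (mem_uIcc_of_le ha.le hab))
  calc
    (b - a) * k a = ∫ _ in a..b, k a := by rw [intervalIntegral.integral_const, smul_eq_mul]
    _ ≤ ∫ x in a..b, k x :=
      intervalIntegral.integral_mono_on hab intervalIntegrable_const hint' fun _ hx =>
        hk ha (ha.trans_le hx.1) hx.1
    _ ≤ Fprim k b := integral_le_Fprim_of_nonneg hk₀ hint ha.le hab le_rfl

theorem tendsto_Fprim_div_sq_nhdsGT_zero (hk₀ : ∀ x ∈ Ioi 0, 0 ≤ k x) (hk : MonotoneOn k (Ioi 0))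
    (hlim : Tendsto (fun x => k x / x) (𝓝[>] 0) (𝓝 0)) :
    Tendsto (fun t => Fprim k t / t ^ 2) (𝓝[>] 0) (𝓝 0) := by
  have hint : ∀ b, 0 ≤ b → IntervalIntegrable k volume 0 b := fun _ =>
    intervalIntegrable_of_monotoneOn_Ioi hk hk₀
  refine tendsto_of_tendsto_of_tendsto_of_le_of_le' tendsto_const_nhds hlim ?_ ?_
  · filter_upwards [self_mem_nhdsWithin] with t (ht : 0 < t)
    have hF : 0 ≤ Fprim k t := by
      simpa [Fprim] using monotoneOn_Fprim_of_nonneg hint hk₀ self_mem_Ici ht.le ht.le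
    positivity
  · filter_upwards [self_mem_nhdsWithin] with t (ht : 0 < t)
    calc
      Fprim k t / t ^ 2 ≤ t * k t / t ^ 2 := by
        gcongr
        exact Fprim_le_mul (hint t ht.le) (hk.mono Ioc_subset_Ioi_self) ht.le
      _ = k t / t := by field_simp

theorem tendsto_Fprim_div_sq_atTop (hk₀ : ∀ x ∈ Ioi 0, 0 ≤ k x) (hk : MonotoneOn k (Ioi 0))
    (hlim : Tendsto (fun x => k x / x) atTop atTop) :
    Tendsto (fun t => Fprim k t / t ^ 2) atTop atTop := by
  have hhalf : Tendsto (fun t : ℝ => k (t / 2) / (t / 2) / 4) atTop atTop :=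
    (hlim.comp (tendsto_id.atTop_div_const two_pos)).atTop_div_const four_pos
  refine tendsto_atTop_mono' _ ?_ hhalf
  filter_upwards [eventually_gt_atTop 0] with t ht
  calc
    k (t / 2) / (t / 2) / 4 = (t - t / 2) * k (t / 2) / t ^ 2 := by field_simp; ring
    _ ≤ Fprim k t / t ^ 2 := by
      gcongr
      exact sub_mul_le_Fprim hk₀ hk (half_pos ht) (half_le_self ht.le)

end HalfLine

theorem eqOn_div_abs_div_self (f : ℝ → ℝ) :
    EqOn (fun x => f x / |x|) (fun x => f x / x) (Ioi 0) :=
  fun x hx => congrArg (f x / ·) (abs_of_pos hx)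

theorem mul_comp_mul_div_abs (f : ℝ → ℝ) {u : ℝ} (hu : u ≠ 0) (x : ℝ) :
    u * f (x * u) / |x| = u * |u| * (f (x * u) / |x * u|) := by
  rw [abs_mul, mul_comm |x|, ← mul_div_assoc, mul_right_comm, mul_comm _ |u|,
    mul_div_mul_left _ _ (abs_ne_zero.2 hu)]

theorem Fprim_mul_comp_mul (f : ℝ → ℝ) (u t : ℝ) :
    Fprim (fun x => u * f (x * u)) t = Fprim f (t * u) := by
  simp only [Fprim, intervalIntegral.integral_const_mul,
    intervalIntegral.mul_integral_comp_mul_right, zero_mul]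

namespace F1Cond

variable {f : ℝ → ℝ}

theorem mul_comp_mul (hf : F1Cond f) {u : ℝ} (hu : u ≠ 0) : F1Cond fun x => u * f (x * u) := by
  obtain ⟨hmono, hzero, htop, hbot⟩ := hf
  have hscale : Tendsto (fun x : ℝ => x * u) (𝓝[≠] 0) (𝓝[≠] 0) := by
    refine tendsto_nhdsWithin_iff.2 ⟨?_, ?_⟩
    · simpa only [zero_mul] using
        ((continuous_mul_const u).tendsto 0).mono_left nhdsWithin_le_nhds
    · filter_upwards [self_mem_nhdsWithin] with x hx using mul_ne_zero hx hu
  have hlim : Tendsto (fun x => u * |u| * (f (x * u) / |x * u|)) (𝓝[≠] 0) (𝓝 0) := by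
    simpa only [mul_zero, Function.comp_apply] using (hzero.comp hscale).const_mul (u * |u|)
  simp only [F1Cond, mul_comp_mul_div_abs f hu]
  rcases hu.lt_or_gt with hneg | hpos
  · have hcoef : u * |u| < 0 := mul_neg_of_neg_of_pos hneg (abs_pos.2 hu)
    refine ⟨fun a ha b hb hab => ?_, hlim, ?_, ?_⟩
    · exact mul_lt_mul_of_neg_left
        (hmono (mul_ne_zero hb hu) (mul_ne_zero ha hu) (mul_lt_mul_of_neg_right hab hneg)) hcoef
    · exact (hbot.comp (tendsto_id.atTop_mul_const_of_neg hneg)).const_mul_atBot_of_neg hcoef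
    · exact (htop.comp (tendsto_id.atBot_mul_const_of_neg hneg)).const_mul_atTop_of_neg hcoef
  · have hcoef : 0 < u * |u| := mul_pos hpos (abs_pos.2 hu)
    refine ⟨fun a ha b hb hab => ?_, hlim, ?_, ?_⟩
    · exact mul_lt_mul_of_pos_left
        (hmono (mul_ne_zero ha hu) (mul_ne_zero hb hu) (mul_lt_mul_of_pos_right hab hpos)) hcoef
    · exact (htop.comp (tendsto_id.atTop_mul_const hpos)).const_mul_atTop hcoef
    · exact (hbot.comp (tendsto_id.atBot_mul_const hpos)).const_mul_atBot hcoef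

theorem strictMonoOn_div_self (hf : F1Cond f) : StrictMonoOn (fun x => f x / x) (Ioi 0) :=
  (hf.1.mono fun _ => ne_of_gt).congr (eqOn_div_abs_div_self f)

theorem tendsto_div_self_nhdsGT_zero (hf : F1Cond f) :
    Tendsto (fun x => f x / x) (𝓝[>] 0) (𝓝 0) :=
  (hf.2.1.mono_left (nhdsWithin_mono 0 fun _ => ne_of_gt)).congr'
    (eqOn_div_abs_div_self f).eventuallyEq_nhdsWithin

theorem tendsto_div_self_atTop (hf : F1Cond f) : Tendsto (fun x => f x / x) atTop atTop :=
  hf.2.2.1.congr' ((eqOn_div_abs_div_self f).eventuallyEq_of_mem (Ioi_mem_atTop 0))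

theorem pos (hf : F1Cond f) {x : ℝ} (hx : 0 < x) : 0 < f x :=
  (div_pos_iff_of_pos_right hx).1 <|
    lt_of_strictMonoOn_Ioi_of_tendsto (g := fun x => f x / x) hf.strictMonoOn_div_self
      hf.tendsto_div_self_nhdsGT_zero hx

theorem neg (hf : F1Cond f) {x : ℝ} (hx : x < 0) : f x < 0 := by
  simpa using (hf.mul_comp_mul (neg_ne_zero.2 one_ne_zero)).pos (neg_pos.2 hx)

theorem nonneg_on_Ioi (hf : F1Cond f) : ∀ x ∈ Ioi 0, 0 ≤ f x := fun _ hx => (hf.pos hx).le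

theorem monotoneOn (hf : F1Cond f) : MonotoneOn f (Ioi 0) :=
  monotoneOn_of_monotoneOn_div_self hf.nonneg_on_Ioi hf.strictMonoOn_div_self.monotoneOn

theorem intervalIntegrable (hf : F1Cond f) {b : ℝ} (hb : 0 ≤ b) : IntervalIntegrable f volume 0 b :=
  intervalIntegrable_of_monotoneOn_Ioi hf.monotoneOn hf.nonneg_on_Ioi hb

theorem monotoneOn_Fprim (hf : F1Cond f) : MonotoneOn (Fprim f) (Ici 0) :=
  monotoneOn_Fprim_of_nonneg (fun _ => hf.intervalIntegrable) hf.nonneg_on_Ioi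

theorem antitoneOn_Fprim (hf : F1Cond f) : AntitoneOn (Fprim f) (Iic 0) := by
  intro a ha b hb hab
  have hrefl := (hf.mul_comp_mul (neg_ne_zero.2 one_ne_zero)).monotoneOn_Fprim
    (mem_Ici.2 (neg_nonneg.2 hb)) (mem_Ici.2 (neg_nonneg.2 ha)) (neg_le_neg hab)
  simpa only [Fprim_mul_comp_mul, neg_mul_neg, mul_one] using hrefl

end F1Cond

theorem properties_of_f_and_F_general (f : ℝ → ℝ) (hf1 : F1Cond f) :
    (∀ u : ℝ, 0 < u → 0 < f u) ∧ (∀ u : ℝ, u < 0 → f u < 0) ∧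
    AntitoneOn (Fprim f) (Iic 0) ∧ MonotoneOn (Fprim f) (Ici 0) ∧
    ∀ u : ℝ, u ≠ 0 →
      MonotoneOn (fun t : ℝ => Fprim f (t * u) / t ^ 2) (Ioi 0) ∧
      Tendsto (fun t : ℝ => Fprim f (t * u) / t ^ 2) (𝓝[>] 0) (𝓝 0) ∧
      Tendsto (fun t : ℝ => Fprim f (t * u) / t ^ 2) atTop atTop := by
  refine ⟨fun u => hf1.pos, fun u => hf1.neg, hf1.antitoneOn_Fprim, hf1.monotoneOn_Fprim,
    fun u hu => ?_⟩
  have hfu := hf1.mul_comp_mul hu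
  simp only [← Fprim_mul_comp_mul f u]
  exact ⟨monotoneOn_Fprim_div_sq (fun _ => hfu.intervalIntegrable)
      hfu.strictMonoOn_div_self.monotoneOn,
    tendsto_Fprim_div_sq_nhdsGT_zero hfu.nonneg_on_Ioi hfu.monotoneOn
      hfu.tendsto_div_self_nhdsGT_zero,
    tendsto_Fprim_div_sq_atTop hfu.nonneg_on_Ioi hfu.monotoneOn hfu.tendsto_div_self_atTop⟩

/-- Basic properties of `f` and `F` under (f1): sign of `f`, monotonicity
of `F` on `(−∞,0]` and `[0,∞)`, and behaviour of `t ↦ F(tu)/t²` on `(0,∞)`. -/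
theorem properties_of_f_and_F (f : ℝ → ℝ) (hf : Continuous f) (hf1 : F1Cond f) :
    (∀ u : ℝ, 0 < u → 0 < f u) ∧ (∀ u : ℝ, u < 0 → f u < 0) ∧
    AntitoneOn (Fprim f) (Iic 0) ∧ MonotoneOn (Fprim f) (Ici 0) ∧
    ∀ u : ℝ, u ≠ 0 →
      MonotoneOn (fun t : ℝ => Fprim f (t * u) / t ^ 2) (Ioi 0) ∧
      Tendsto (fun t : ℝ => Fprim f (t * u) / t ^ 2) (𝓝[>] 0) (𝓝 0) ∧
      Tendsto (fun t : ℝ => Fprim f (t * u) / t ^ 2) atTop atTop :=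
  properties_of_f_and_F_general f hf1
end

section
/- Let f : ℝ → ℝ be continuous and satisfy (f1), let λ ≥ 0, and let u : ℝ → ℝ be a twice continuously differentiable function satisfying u″(x) = −(λ u(x) + f(u(x))) for all x, periodic with period τ > 0, whose maximum value over [0, τ] is M > 0 and whose minimum value over [0, τ] is −m with m > 0. Then (τ/8) · min(m, M)² ≤ ∫₀^τ u(x)² dx ≤ τ · max(m, M)². -/
open Filter Topology Set MeasureTheory

/-!
Put `g s = λ s + f s`, a nondecreasing function vanishing at `0`, so that `V = Fprim g` is convex
and minimal at `0`. The energy `u'² / 2 + V u` is a constant `E`, and both turning points have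
`V M = V (-m) = E`; hence `V ≤ E` on `[-a, a]`, where `a = min m M`. Since `u` is periodic, the
derivative of `K u * u'` with `K s = s (a² - s²)` integrates to `0` over a period (a virial
identity), so it can be added for free to `E (8 u² - a²)`. With `u'² = 2 (E - V u)`, the tangent
line inequalities for `V` show that the sum is pointwise nonnegative.
-/

namespace F1Cond

variable {f : ℝ → ℝ}

-- The convention `f 0 / |0| = 0` is exactly the continuous extension of the quotient to `0`.
theorem monotone_div_abs (hf1 : F1Cond f) : Monotone fun s => f s / |s| := by
  have hcont : ContinuousWithinAt (fun s => f s / |s|) {0}ᶜ 0 := by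
    simpa [ContinuousWithinAt] using hf1.2.1
  have hcluster : ClusterPt (0 : ℝ) (𝓟 {0}ᶜ) := mem_closure_iff_clusterPt.mp (by simp)
  have hinsert : MonotoneOn (fun s => f s / |s|) (insert 0 {0}ᶜ) :=
    hf1.1.monotoneOn.insert_of_continuousWithinAt hcluster hcont
  rwa [insert_eq, union_compl_self, monotoneOn_univ] at hinsert

theorem map_zero (hf1 : F1Cond f) (hf : Continuous f) : f 0 = 0 := by
  have hlim : Tendsto (fun s => f s / |s| * |s|) (𝓝[≠] 0) (𝓝 0) := by
    simpa using hf1.2.1.mul (continuous_abs.continuousWithinAt (s := {0}ᶜ) (x := 0)).tendsto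
  refine tendsto_nhds_unique hf.continuousWithinAt.tendsto (hlim.congr' ?_)
  filter_upwards [self_mem_nhdsWithin] with s hs
  exact div_mul_cancel₀ _ (abs_ne_zero.mpr hs)

theorem monotone (hf1 : F1Cond f) (hf : Continuous f) : Monotone f := by
  have hf0 := hf1.map_zero hf
  have hfactor (s : ℝ) : f s / |s| * |s| = f s :=
    div_mul_cancel_of_imp fun hs => by rw [abs_eq_zero.mp hs, hf0]
  have hnonneg {s : ℝ} (hs : 0 ≤ s) : 0 ≤ f s / |s| := by simpa using hf1.monotone_div_abs hs
  have hnonpos {s : ℝ} (hs : s ≤ 0) : f s / |s| ≤ 0 := by simpa using hf1.monotone_div_abs hs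
  refine MonotoneOn.Iic_union_Ici (a := 0) (fun s hs t ht hst => ?_) fun s hs t ht hst => ?_
  · rw [← hfactor s, ← hfactor t]
    calc f s / |s| * |s| ≤ f s / |s| * |t| :=
          mul_le_mul_of_nonpos_left (abs_le_abs_of_nonpos ht hst) (hnonpos hs)
      _ ≤ f t / |t| * |t| :=
          mul_le_mul_of_nonneg_right (hf1.monotone_div_abs hst) (abs_nonneg t)
  · rw [← hfactor s, ← hfactor t]
    exact mul_le_mul (hf1.monotone_div_abs hst) (abs_le_abs_of_nonneg hs hst) (abs_nonneg s)
      (hnonneg ht)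

end F1Cond

section Potential

variable {g : ℝ → ℝ}

theorem hasDerivAt_Fprim (hg : Continuous g) (s : ℝ) : HasDerivAt (Fprim g) (g s) s :=
  (hg.integral_hasStrictDerivAt 0 s).hasDerivAt

theorem Fprim_zero (g : ℝ → ℝ) : Fprim g 0 = 0 :=
  intervalIntegral.integral_same

theorem convexOn_Fprim (hg : Continuous g) (hmono : Monotone g) : ConvexOn ℝ univ (Fprim g) := by
  refine Monotone.convexOn_univ_of_deriv (fun s => (hasDerivAt_Fprim hg s).differentiableAt) ?_
  rwa [show deriv (Fprim g) = g from funext fun s => (hasDerivAt_Fprim hg s).deriv]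

theorem add_mul_sub_le_of_convexOn_univ {V : ℝ → ℝ} {V' s : ℝ} (hV : ConvexOn ℝ univ V)
    (hV' : HasDerivAt V V' s) (t : ℝ) : V s + V' * (t - s) ≤ V t := by
  rcases lt_trichotomy s t with hst | rfl | hts
  · have hslope := hV.le_slope_of_hasDerivAt trivial trivial hst hV'
    rw [slope_def_field, le_div_iff₀ (sub_pos.mpr hst)] at hslope
    linarith
  · simp
  · have hslope := hV.slope_le_of_hasDerivAt trivial trivial hts hV'
    rw [slope_def_field, div_le_iff₀ (sub_pos.mpr hts)] at hslope
    linarith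

theorem Fprim_add_mul_sub_le (hg : Continuous g) (hmono : Monotone g) (s t : ℝ) :
    Fprim g s + g s * (t - s) ≤ Fprim g t :=
  add_mul_sub_le_of_convexOn_univ (convexOn_Fprim hg hmono) (hasDerivAt_Fprim hg s) t

theorem Fprim_nonneg (hg : Continuous g) (hmono : Monotone g) (hg0 : g 0 = 0) (s : ℝ) :
    0 ≤ Fprim g s := by
  simpa [Fprim_zero, hg0] using Fprim_add_mul_sub_le hg hmono 0 s

end Potential

/-- The pair `(u, v)` of position and velocity solves the first-order system `u' = v`,
`v' = -g(u)` on the whole line, that is, `-u'' = g(u)`. -/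
structure IsNewtonTrajectory (g u v : ℝ → ℝ) : Prop where
  hasDerivAt_position (x : ℝ) : HasDerivAt u (v x) x
  hasDerivAt_velocity (x : ℝ) : HasDerivAt v (-g (u x)) x

theorem isNewtonTrajectory_deriv {g u : ℝ → ℝ} (hu : ContDiff ℝ 2 u)
    (hODE : ∀ x, deriv (deriv u) x = -g (u x)) : IsNewtonTrajectory g u (deriv u) where
  hasDerivAt_position x := (hu.differentiable two_ne_zero x).hasDerivAt
  hasDerivAt_velocity x := hODE x ▸ (hu.differentiable_deriv_two x).hasDerivAt

namespace IsNewtonTrajectory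

variable {g u v V K K' : ℝ → ℝ} {a b : ℝ}

theorem continuous_position (h : IsNewtonTrajectory g u v) : Continuous u :=
  continuous_iff_continuousAt.mpr fun x => (h.hasDerivAt_position x).continuousAt

theorem continuous_velocity (h : IsNewtonTrajectory g u v) : Continuous v :=
  continuous_iff_continuousAt.mpr fun x => (h.hasDerivAt_velocity x).continuousAt

theorem energy_eq (h : IsNewtonTrajectory g u v) (hV : ∀ s, HasDerivAt V (g s) s) (x y : ℝ) :
    v x ^ 2 / 2 + V (u x) = v y ^ 2 / 2 + V (u y) := by
  have hderiv (z : ℝ) : HasDerivAt (fun z => v z ^ 2 / 2 + V (u z)) 0 z := by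
    refine ((((h.hasDerivAt_velocity z).pow 2).div_const 2).add
      ((hV (u z)).comp z (h.hasDerivAt_position z))).congr_deriv ?_
    simp only [Nat.cast_ofNat, Nat.add_one_sub_one, pow_one]
    ring
  exact is_const_of_deriv_eq_zero (fun z => (hderiv z).differentiableAt)
    (fun z => (hderiv z).deriv) x y

theorem energy_pos (h : IsNewtonTrajectory g u v) (hV : ∀ s, HasDerivAt V (g s) s)
    (hV_nonneg : ∀ s, 0 ≤ V s) {x y : ℝ} (hxy : u x ≠ u y) : 0 < v x ^ 2 / 2 + V (u x) := by
  by_contra! hE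
  have hv (z : ℝ) : v z = 0 := by
    refine pow_eq_zero_iff two_ne_zero |>.mp (le_antisymm ?_ (sq_nonneg _))
    linarith [h.energy_eq hV x z, hV_nonneg (u z)]
  exact hxy <| is_const_of_deriv_eq_zero (fun z => (h.hasDerivAt_position z).differentiableAt)
    (fun z => (h.hasDerivAt_position z).deriv.trans (hv z)) x y

theorem integral_deriv_comp_mul_velocity_eq_zero (h : IsNewtonTrajectory g u v) (hg : Continuous g)
    (hK : ∀ s, HasDerivAt K (K' s) s) (hK' : Continuous K') (hu : u a = u b) (hv : v a = v b) :
    ∫ x in a..b, (K' (u x) * v x ^ 2 - K (u x) * g (u x)) = 0 := by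
  have hderiv (x : ℝ) : HasDerivAt (fun x => K (u x) * v x)
      (K' (u x) * v x ^ 2 - K (u x) * g (u x)) x := by
    refine (((hK (u x)).comp x (h.hasDerivAt_position x)).mul
      (h.hasDerivAt_velocity x)).congr_deriv ?_
    simp only [Function.comp_apply]
    ring
  have hK_cont : Continuous K := continuous_iff_continuousAt.mpr fun s => (hK s).continuousAt
  have hu_cont := h.continuous_position
  have hv_cont := h.continuous_velocity
  rw [intervalIntegral.integral_eq_sub_of_hasDerivAt (fun x _ => hderiv x)
    (Continuous.intervalIntegrable (by fun_prop) _ _), hu, hv, sub_self]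

end IsNewtonTrajectory

section PointwiseBound

-- In the two lemmas below, `σ`, `w` and `p` stand for `|s|`, `E - V s` and `s * g s`.
variable {a σ E w p : ℝ}

theorem virial_density_nonneg_of_le (ha : 0 < a) (hσ : 0 ≤ σ) (hσa : σ ≤ a) (hw : 0 ≤ w)
    (hwE : w ≤ E) (hp : E - w ≤ p) (hpw : p * (a - σ) ≤ σ * w) :
    0 ≤ E * (8 * σ ^ 2 - a ^ 2) + ((a ^ 2 - 3 * σ ^ 2) * (2 * w) - (a ^ 2 - σ ^ 2) * p) := by
  have hE : 0 ≤ E := hw.trans hwE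
  have hw_ge : (a - σ) * E ≤ a * w := by
    linarith [mul_le_mul_of_nonneg_right hp (sub_nonneg.mpr hσa)]
  -- Eliminating `p` leaves an expression affine in `w ∈ [(1 - σ / a) E, E]`, so that it
  -- suffices to check the endpoint selected by the sign of the slope.
  suffices hkey : 0 ≤ E * (8 * σ ^ 2 - a ^ 2) + w * (2 * a ^ 2 - a * σ - 7 * σ ^ 2) by
    linarith [mul_le_mul_of_nonneg_left hpw (add_nonneg ha.le hσ)]
  rcases le_total 0 (2 * a ^ 2 - a * σ - 7 * σ ^ 2) with hk | hk
  · refine nonneg_of_mul_nonneg_right (?_ : 0 ≤ a * _) ha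
    calc 0 ≤ E * (a * (a - 2 * σ) ^ 2 + σ * (a - σ) ^ 2 + 6 * σ ^ 3) := by positivity
      _ = a * (E * (8 * σ ^ 2 - a ^ 2)) + (a - σ) * E * (2 * a ^ 2 - a * σ - 7 * σ ^ 2) := by ring
      _ ≤ a * (E * (8 * σ ^ 2 - a ^ 2)) + a * w * (2 * a ^ 2 - a * σ - 7 * σ ^ 2) := by gcongr
      _ = a * (E * (8 * σ ^ 2 - a ^ 2) + w * (2 * a ^ 2 - a * σ - 7 * σ ^ 2)) := by ring
  · calc 0 ≤ E * (a * (a - σ) + σ ^ 2) :=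
          mul_nonneg hE (add_nonneg (mul_nonneg ha.le (sub_nonneg.mpr hσa)) (sq_nonneg σ))
      _ = E * (8 * σ ^ 2 - a ^ 2) + E * (2 * a ^ 2 - a * σ - 7 * σ ^ 2) := by ring
      _ ≤ E * (8 * σ ^ 2 - a ^ 2) + w * (2 * a ^ 2 - a * σ - 7 * σ ^ 2) :=
          add_le_add_right (mul_le_mul_of_nonpos_right hwE hk) _

theorem virial_density_nonneg_of_ge (ha : 0 ≤ a) (haσ : a ≤ σ) (hw : 0 ≤ w) (hwE : w ≤ E)
    (hp : 0 ≤ p) :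
    0 ≤ E * (8 * σ ^ 2 - a ^ 2) + ((a ^ 2 - 3 * σ ^ 2) * (2 * w) - (a ^ 2 - σ ^ 2) * p) := by
  have hsq : 0 ≤ σ ^ 2 - a ^ 2 := sub_nonneg.mpr (pow_le_pow_left₀ ha haσ 2)
  have hE : 0 ≤ E := hw.trans hwE
  have hsq' : 0 ≤ 3 * σ ^ 2 - a ^ 2 := by linarith [sq_nonneg σ]
  calc 0 ≤ E * (2 * σ ^ 2 + a ^ 2) + 2 * (3 * σ ^ 2 - a ^ 2) * (E - w) + (σ ^ 2 - a ^ 2) * p :=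
        add_nonneg (add_nonneg (by positivity)
          (mul_nonneg (by positivity) (sub_nonneg.mpr hwE))) (mul_nonneg hsq hp)
    _ = E * (8 * σ ^ 2 - a ^ 2) + ((a ^ 2 - 3 * σ ^ 2) * (2 * w) - (a ^ 2 - σ ^ 2) * p) := by ring

end PointwiseBound

theorem virial_density_nonneg {V g : ℝ → ℝ} {a E : ℝ} (ha : 0 < a)
    (htangent : ∀ s t, V s + g s * (t - s) ≤ V t) (hV0 : V 0 = 0) (hV_nonneg : ∀ s, 0 ≤ V s)
    (hVa : V a ≤ E) (hVna : V (-a) ≤ E) {s : ℝ} (hVs : V s ≤ E) :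
    0 ≤ E * (8 * s ^ 2 - a ^ 2) +
      ((a ^ 2 - 3 * s ^ 2) * (2 * (E - V s)) - s * (a ^ 2 - s ^ 2) * g s) := by
  have hVg : V s ≤ s * g s := by linarith [htangent s 0]
  have hwall : s * g s * (a - |s|) ≤ |s| * (E - V s) := by
    rcases le_total 0 s with hs | hs
    · rw [abs_of_nonneg hs]
      linarith [mul_le_mul_of_nonneg_left ((htangent s a).trans hVa) hs]
    · rw [abs_of_nonpos hs]
      linarith [mul_le_mul_of_nonneg_left ((htangent s (-a)).trans hVna) (neg_nonneg.mpr hs)]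
  rw [← sq_abs s, mul_right_comm, mul_comm (s * g s)]
  rcases le_total |s| a with hsa | hsa
  · exact virial_density_nonneg_of_le ha (abs_nonneg s) hsa (sub_nonneg.mpr hVs)
      (sub_le_self E (hV_nonneg s)) (by linarith) hwall
  · exact virial_density_nonneg_of_ge ha.le hsa (sub_nonneg.mpr hVs) (sub_le_self E (hV_nonneg s))
      ((hV_nonneg s).trans hVg)

theorem IsNewtonTrajectory.mul_sq_le_integral_sq {g u v : ℝ → ℝ} {a b c E : ℝ}
    (h : IsNewtonTrajectory g u v) (hg : Continuous g) (hmono : Monotone g) (hg0 : g 0 = 0)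
    (hbc : b ≤ c) (hu_eq : u b = u c) (hv_eq : v b = v c) (hE : 0 < E)
    (henergy : ∀ x, v x ^ 2 / 2 + Fprim g (u x) = E)
    (ha : 0 < a) (hVa : Fprim g a ≤ E) (hVna : Fprim g (-a) ≤ E) :
    (c - b) / 8 * a ^ 2 ≤ ∫ x in b..c, u x ^ 2 := by
  have hK (s : ℝ) : HasDerivAt (fun s => s * (a ^ 2 - s ^ 2)) (a ^ 2 - 3 * s ^ 2) s := by
    refine ((hasDerivAt_id s).mul ((hasDerivAt_pow 2 s).const_sub (a ^ 2))).congr_deriv ?_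
    simp only [id_eq, Nat.cast_ofNat, Nat.add_one_sub_one, pow_one]
    ring
  have hvirial := h.integral_deriv_comp_mul_velocity_eq_zero hg hK (by fun_prop) hu_eq hv_eq
  have hpointwise (x : ℝ) : 0 ≤ E * (8 * u x ^ 2 - a ^ 2) +
      ((a ^ 2 - 3 * u x ^ 2) * v x ^ 2 - u x * (a ^ 2 - u x ^ 2) * g (u x)) := by
    rw [show v x ^ 2 = 2 * (E - Fprim g (u x)) by linarith [henergy x]]
    exact virial_density_nonneg ha (Fprim_add_mul_sub_le hg hmono) (Fprim_zero g)
      (Fprim_nonneg hg hmono hg0) hVa hVna (by linarith [henergy x, sq_nonneg (v x)])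
  have hu := h.continuous_position
  have hv := h.continuous_velocity
  have hsum : 0 ≤ E * (8 * (∫ x in b..c, u x ^ 2) - (c - b) * a ^ 2) := by
    have hnonneg := intervalIntegral.integral_nonneg (μ := volume) hbc fun x _ => hpointwise x
    rw [intervalIntegral.integral_add (Continuous.intervalIntegrable (by fun_prop) _ _)
        (Continuous.intervalIntegrable (by fun_prop) _ _), hvirial,
      intervalIntegral.integral_const_mul,
      intervalIntegral.integral_sub (Continuous.intervalIntegrable (by fun_prop) _ _)
        intervalIntegrable_const,
      intervalIntegral.integral_const_mul, intervalIntegral.integral_const] at hnonneg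
    simpa using hnonneg
  linarith [nonneg_of_mul_nonneg_right hsum hE]

theorem integral_sq_le_of_abs_le {u : ℝ → ℝ} {a b c : ℝ} (hab : a ≤ b)
    (hu : IntervalIntegrable (fun x => u x ^ 2) volume a b) (hc : ∀ x ∈ Icc a b, |u x| ≤ c) :
    ∫ x in a..b, u x ^ 2 ≤ (b - a) * c ^ 2 :=
  calc ∫ x in a..b, u x ^ 2 ≤ ∫ _ in a..b, c ^ 2 :=
        intervalIntegral.integral_mono_on hab hu intervalIntegrable_const fun x hx =>
          sq_le_sq.mpr ((hc x hx).trans (le_abs_self c))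
    _ = (b - a) * c ^ 2 := by simp

theorem periodic_deriv {𝕜 F : Type*} [NontriviallyNormedField 𝕜] [NormedAddCommGroup F]
    [NormedSpace 𝕜 F] {u : 𝕜 → F} {τ : 𝕜} (hper : Function.Periodic u τ) :
    Function.Periodic (deriv u) τ := fun x => by
  rw [← deriv_comp_add_const, hper.funext]

theorem L2_bounds_for_periodic_ODE_solution_general {g u : ℝ → ℝ} (hg : Continuous g)
    (hmono : Monotone g) (hg0 : g 0 = 0) (hu : ContDiff ℝ 2 u)
    (hODE : ∀ x, deriv (deriv u) x = -g (u x)) {τ : ℝ} (hτ : 0 < τ)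
    (hper : Function.Periodic u τ) {M m : ℝ} (hM : 0 < M) (hm : 0 < m)
    (hmax_le : ∀ x ∈ Icc 0 τ, u x ≤ M) (hmax_eq : ∃ x ∈ Icc 0 τ, u x = M)
    (hmin_le : ∀ x ∈ Icc 0 τ, -m ≤ u x) (hmin_eq : ∃ x ∈ Icc 0 τ, u x = -m) :
    τ / 8 * min m M ^ 2 ≤ (∫ x in (0 : ℝ)..τ, u x ^ 2) ∧
    (∫ x in (0 : ℝ)..τ, u x ^ 2) ≤ τ * max m M ^ 2 := by
  have hrange (x : ℝ) : -m ≤ u x ∧ u x ≤ M := by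
    obtain ⟨y, hy, hxy⟩ := hper.exists_mem_Ico₀ hτ x
    exact hxy ▸ ⟨hmin_le y (Ico_subset_Icc_self hy), hmax_le y (Ico_subset_Icc_self hy)⟩
  obtain ⟨p, -, hp⟩ := hmax_eq
  obtain ⟨q, -, hq⟩ := hmin_eq
  have hvp : deriv u p = 0 := IsLocalMax.deriv_eq_zero (.of_forall fun x => hp ▸ (hrange x).2)
  have hvq : deriv u q = 0 := IsLocalMin.deriv_eq_zero (.of_forall fun x => hq ▸ (hrange x).1)
  have h := isNewtonTrajectory_deriv hu hODE
  have hV := hasDerivAt_Fprim hg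
  have henergy (x : ℝ) : deriv u x ^ 2 / 2 + Fprim g (u x) = Fprim g M := by
    simpa [hp, hvp] using h.energy_eq hV x p
  have hpos : 0 < Fprim g M := by
    have hpq : u p ≠ u q := by linarith
    simpa [hp, hvp] using h.energy_pos hV (Fprim_nonneg hg hmono hg0) hpq
  have hturn : Fprim g (-m) = Fprim g M := by simpa [hq, hvq] using henergy q
  have hmin_pos : 0 < min m M := lt_min hm hM
  have hwell {s : ℝ} (hs : s ∈ Icc (-m) M) : Fprim g s ≤ Fprim g M := by
    simpa [hturn] using (convexOn_Fprim hg hmono).le_max_of_mem_Icc trivial trivial hs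
  constructor
  · simpa using h.mul_sq_le_integral_sq hg hmono hg0 hτ.le hper.eq.symm
      (periodic_deriv hper).eq.symm hpos henergy hmin_pos
      (hwell ⟨by linarith, min_le_right m M⟩) (hwell ⟨neg_le_neg (min_le_left m M), by linarith⟩)
  · simpa using integral_sq_le_of_abs_le hτ.le ((hu.continuous.pow 2).intervalIntegrable 0 τ)
      fun x _ => abs_le.mpr ⟨(neg_le_neg (le_max_left m M)).trans (hrange x).1,
        (hrange x).2.trans (le_max_right m M)⟩

/-- For a `τ`-periodic `C²` solution of `u″ = −(λu + f(u))` with maximum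
value `M > 0` and minimum value `−m < 0` on `[0, τ]`, one has
`(τ/8) min(m,M)² ≤ ∫₀^τ u² ≤ τ max(m,M)²`. -/
theorem L2_bounds_for_periodic_ODE_solution (f : ℝ → ℝ) (hf : Continuous f)
    (hf1 : F1Cond f) (lambda : ℝ) (hlambda : 0 ≤ lambda)
    (u : ℝ → ℝ) (hu : ContDiff ℝ 2 u)
    (hODE : ∀ x : ℝ, deriv (deriv u) x = -(lambda * u x + f (u x)))
    (τ : ℝ) (hτ : 0 < τ) (hper : Function.Periodic u τ)
    (M m : ℝ) (hM : 0 < M) (hm : 0 < m)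
    (hmax_le : ∀ x ∈ Icc 0 τ, u x ≤ M) (hmax_eq : ∃ x ∈ Icc 0 τ, u x = M)
    (hmin_le : ∀ x ∈ Icc 0 τ, -m ≤ u x) (hmin_eq : ∃ x ∈ Icc 0 τ, u x = -m) :
    τ / 8 * min m M ^ 2 ≤ (∫ x in (0 : ℝ)..τ, u x ^ 2) ∧
    (∫ x in (0 : ℝ)..τ, u x ^ 2) ≤ τ * max m M ^ 2 := by
  have hmono : Monotone fun s => lambda * s + f s :=
    (monotone_id.const_mul hlambda).add (hf1.monotone hf)
  exact L2_bounds_for_periodic_ODE_solution_general (g := fun s => lambda * s + f s) (by fun_prop)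
    hmono (by simp [hf1.map_zero hf]) hu hODE hτ hper hM hm hmax_le hmax_eq hmin_le hmin_eq
end

section
/- Let f : ℝ → ℝ be continuous and satisfy (f1). Then for every λ ≥ 0 and every M > 0 the improper integral ∫₀^M (V_λ(M) − V_λ(u))^{−1/2} du is finite and satisfies ∫₀^M (V_λ(M) − V_λ(u))^{−1/2} du ≤ (π/2) · M / √(F(M)). In particular, sup_{λ ≥ 0} ∫₀^M (V_λ(M) − V_λ(u))^{−1/2} du → 0 as M → +∞. -/
open Filter Topology Set MeasureTheory

/-!
Monotonicity of `f(s)/s` on `(0, ∞)` gives `V_λ(rM) ≤ r² V_λ(M)` for `0 < r ≤ 1`: integrate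
`f(rt) ≤ r f(t)`, and note that the term `(λ/2)s²` scales exactly. Hence
`V_λ(M) − V_λ(u) ≥ V_λ(M)(1 − (u/M)²)`, so the time integral is at most that of the harmonic
oscillator, which `arcsin` evaluates to `(π/2) M / √V_λ(M)`; and `V_λ ≥ F` for `λ ≥ 0`. The uniform
limit holds because `f(s)/s → ∞` forces `F(M)/M² → ∞`.
-/

/-- The time map of a potential `V`: `√2` times the time a solution of `−u″ = V′(u)` takes to
descend from a maximum `M` to `0`. -/
noncomputable def timeMap (V : ℝ → ℝ) (M : ℝ) : ℝ :=
  ∫ s in (0 : ℝ)..M, (V M - V s) ^ (-(1 / 2) : ℝ)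

section ArcsineIntegral

lemma intervalIntegrable_inv_sqrt_one_sub_sq {a b : ℝ} (ha : a ∈ Icc (-1) 1)
    (hb : b ∈ Icc (-1) 1) : IntervalIntegrable (fun x => (√(1 - x ^ 2))⁻¹) volume a b := by
  have h := Polynomial.Chebyshev.intervalIntegrable_sqrt_one_sub_sq_inv
  simp only [Real.sqrt_inv] at h
  refine h.mono_set (uIcc_subset_uIcc ?_ ?_) <;> rwa [uIcc_of_le (by norm_num)]

lemma integral_inv_sqrt_one_sub_sq {a b : ℝ} (ha : -1 ≤ a) (hab : a ≤ b) (hb : b ≤ 1) :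
    ∫ x in a..b, (√(1 - x ^ 2))⁻¹ = Real.arcsin b - Real.arcsin a := by
  refine intervalIntegral.integral_eq_sub_of_hasDerivAt_of_le hab
    Real.continuous_arcsin.continuousOn (fun x hx => ?_)
    (intervalIntegrable_inv_sqrt_one_sub_sq ⟨ha, hab.trans hb⟩ ⟨ha.trans hab, hb⟩)
  simpa only [one_div] using
    Real.hasDerivAt_arcsin (ha.trans_lt hx.1).ne' (hx.2.trans_le hb).ne

lemma intervalIntegrable_inv_sqrt_one_sub_div_sq (M : ℝ) :
    IntervalIntegrable (fun s => (√(1 - (s / M) ^ 2))⁻¹) volume 0 M := by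
  have h := (intervalIntegrable_inv_sqrt_one_sub_sq (a := 0) (b := 1)
    (by norm_num) (by norm_num)).comp_mul_left (c := M⁻¹)
  simpa only [zero_div, one_div, inv_inv, inv_mul_eq_div] using h

lemma integral_inv_sqrt_one_sub_div_sq (M : ℝ) :
    ∫ s in (0 : ℝ)..M, (√(1 - (s / M) ^ 2))⁻¹ = Real.pi / 2 * M := by
  rcases eq_or_ne M 0 with rfl | hM
  · rw [intervalIntegral.integral_same, mul_zero]
  rw [intervalIntegral.integral_comp_div (fun x => (√(1 - x ^ 2))⁻¹) hM, zero_div, div_self hM,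
    integral_inv_sqrt_one_sub_sq (by norm_num) zero_le_one le_rfl, Real.arcsin_one,
    Real.arcsin_zero, sub_zero, smul_eq_mul, mul_comm]

end ArcsineIntegral

section TimeMap

variable {V : ℝ → ℝ} {M : ℝ}

lemma timeMap_nonneg (hM : 0 ≤ M) (hV : ∀ s ∈ Icc 0 M, V s ≤ V M) : 0 ≤ timeMap V M :=
  intervalIntegral.integral_nonneg hM fun s hs => Real.rpow_nonneg (sub_nonneg.2 (hV s hs)) _

lemma le_of_le_sq_mul (hVM : 0 ≤ V M) {s : ℝ} (hs : s ∈ Icc 0 M)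
    (hV : V s ≤ (s / M) ^ 2 * V M) : V s ≤ V M :=
  hV.trans <| mul_le_of_le_one_left hVM <|
    pow_le_one₀ (div_nonneg hs.1 (hs.1.trans hs.2)) (div_le_one_of_le₀ hs.2 (hs.1.trans hs.2))

lemma rpow_sub_le_of_le_sq_mul (hVM : 0 < V M) {s : ℝ} (hs : s ∈ Ioo 0 M)
    (hV : V s ≤ (s / M) ^ 2 * V M) :
    (V M - V s) ^ (-(1 / 2) : ℝ) ≤ (√(V M))⁻¹ * (√(1 - (s / M) ^ 2))⁻¹ := by
  have hM : 0 < M := hs.1.trans hs.2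
  have hr : (s / M) ^ 2 < 1 :=
    pow_lt_one₀ (div_nonneg hs.1.le hM.le) ((div_lt_one hM).2 hs.2) two_ne_zero
  have hpos : 0 < V M * (1 - (s / M) ^ 2) := mul_pos hVM (sub_pos.2 hr)
  calc (V M - V s) ^ (-(1 / 2) : ℝ)
      ≤ (V M * (1 - (s / M) ^ 2)) ^ (-(1 / 2) : ℝ) :=
        Real.rpow_le_rpow_of_nonpos hpos (by linarith) (by norm_num)
    _ = (√(V M))⁻¹ * (√(1 - (s / M) ^ 2))⁻¹ := by
        rw [Real.rpow_neg hpos.le, ← Real.sqrt_eq_rpow, Real.sqrt_mul hVM.le, mul_inv]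

lemma intervalIntegrable_rpow_sub_of_le_sq_mul (hM : 0 < M) (hVM : 0 < V M)
    (hcont : ContinuousOn V (Ioo 0 M)) (hV : ∀ s ∈ Ioo 0 M, V s ≤ (s / M) ^ 2 * V M) :
    IntervalIntegrable (fun s => (V M - V s) ^ (-(1 / 2) : ℝ)) volume 0 M := by
  have hmajorant := (intervalIntegrable_inv_sqrt_one_sub_div_sq M).const_mul (√(V M))⁻¹
  rw [intervalIntegrable_iff_integrableOn_Ioo_of_le hM.le] at hmajorant ⊢
  have hmeas : AEMeasurable V (volume.restrict (Ioo 0 M)) := hcont.aemeasurable measurableSet_Ioo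
  refine hmajorant.mono' ((hmeas.const_sub _).pow_const _).aestronglyMeasurable ?_
  filter_upwards [ae_restrict_mem measurableSet_Ioo] with s hs
  have hle : V s ≤ V M := le_of_le_sq_mul hVM.le (Ioo_subset_Icc_self hs) (hV s hs)
  rw [Real.norm_of_nonneg (Real.rpow_nonneg (sub_nonneg.2 hle) _)]
  exact rpow_sub_le_of_le_sq_mul hVM hs (hV s hs)

lemma timeMap_le_of_le_sq_mul (hM : 0 < M) (hVM : 0 < V M)
    (hcont : ContinuousOn V (Ioo 0 M)) (hV : ∀ s ∈ Ioo 0 M, V s ≤ (s / M) ^ 2 * V M) :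
    timeMap V M ≤ Real.pi / 2 * M / √(V M) := by
  calc timeMap V M
      ≤ ∫ s in (0 : ℝ)..M, (√(V M))⁻¹ * (√(1 - (s / M) ^ 2))⁻¹ :=
        intervalIntegral.integral_mono_on_of_le_Ioo hM.le
          (intervalIntegrable_rpow_sub_of_le_sq_mul hM hVM hcont hV)
          ((intervalIntegrable_inv_sqrt_one_sub_div_sq M).const_mul _)
          fun s hs => rpow_sub_le_of_le_sq_mul hVM hs (hV s hs)
    _ = Real.pi / 2 * M / √(V M) := by
        rw [intervalIntegral.integral_const_mul, integral_inv_sqrt_one_sub_div_sq M,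
          inv_mul_eq_div]

end TimeMap

section Primitive

variable {f : ℝ → ℝ} {M : ℝ}

lemma Fprim_mul_le (hf : IntervalIntegrable f volume 0 M)
    (hmono : MonotoneOn (fun s => f s / s) (Ioi 0)) (hM : 0 ≤ M) {r : ℝ} (hr : 0 < r)
    (hr1 : r ≤ 1) : Fprim f (r * M) ≤ r ^ 2 * Fprim f M := by
  have hrM : r * M ∈ uIcc 0 M := by
    rw [uIcc_of_le hM]
    exact ⟨mul_nonneg hr.le hM, mul_le_of_le_one_left hM hr1⟩
  have hint : IntervalIntegrable (fun t => f (r * t)) volume 0 M := by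
    simpa only [zero_div, mul_div_cancel_left₀ M hr.ne'] using
      (hf.mono_set (uIcc_subset_uIcc_left hrM)).comp_mul_left (c := r)
  have hpoint (t : ℝ) (ht : t ∈ Ioo 0 M) : f (r * t) ≤ r * f t := by
    have hrt : 0 < r * t := mul_pos hr ht.1
    have hquot : f (r * t) / (r * t) ≤ f t / t :=
      hmono hrt ht.1 (mul_le_of_le_one_left ht.1.le hr1)
    rw [div_le_iff₀ hrt] at hquot
    exact hquot.trans_eq (by field_simp [ht.1.ne'])
  calc Fprim f (r * M)
      = r * ∫ t in (0 : ℝ)..M, f (r * t) := by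
        rw [intervalIntegral.mul_integral_comp_mul_left, mul_zero, Fprim]
    _ ≤ r * ∫ t in (0 : ℝ)..M, r * f t := by
        gcongr
        exact intervalIntegral.integral_mono_on_of_le_Ioo hM hint (hf.const_mul r) hpoint
    _ = r ^ 2 * Fprim f M := by
        rw [intervalIntegral.integral_const_mul, Fprim, ← mul_assoc, ← sq]

lemma Vpot_le_sq_mul (hf : IntervalIntegrable f volume 0 M)
    (hmono : MonotoneOn (fun s => f s / s) (Ioi 0)) (lambda : ℝ) {s : ℝ} (hs : s ∈ Icc 0 M) :
    Vpot f lambda s ≤ (s / M) ^ 2 * Vpot f lambda M := by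
  rcases hs.1.eq_or_lt with rfl | hs0
  · simp [Vpot, Fprim]
  have hM : 0 < M := hs0.trans_le hs.2
  have hF := Fprim_mul_le hf hmono hM.le (div_pos hs0 hM) ((div_le_one hM).2 hs.2)
  have hquad : (s / M) ^ 2 * (lambda / 2 * M ^ 2) = lambda / 2 * s ^ 2 := by field_simp
  rw [div_mul_cancel₀ _ hM.ne'] at hF
  rw [Vpot, Vpot, mul_add, hquad]
  gcongr

lemma continuousOn_Vpot (hf : IntervalIntegrable f volume 0 M) (lambda : ℝ) :
    ContinuousOn (Vpot f lambda) (uIcc 0 M) :=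
  (intervalIntegral.continuousOn_primitive_interval' hf left_mem_uIcc).add (by fun_prop)

lemma Fprim_le_Vpot {lambda : ℝ} (hl : 0 ≤ lambda) (s : ℝ) : Fprim f s ≤ Vpot f lambda s :=
  le_add_of_nonneg_right (by positivity)

lemma Fprim_add_le_of_mul_le {a c : ℝ} (hfa : IntervalIntegrable f volume 0 a)
    (hfM : IntervalIntegrable f volume 0 M) (haM : a ≤ M) (h : ∀ s ∈ Ioo a M, c * s ≤ f s) :
    Fprim f a + c * ((M ^ 2 - a ^ 2) / 2) ≤ Fprim f M := by
  have haf : IntervalIntegrable f volume a M := hfa.symm.trans hfM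
  calc Fprim f a + c * ((M ^ 2 - a ^ 2) / 2)
      = Fprim f a + ∫ s in a..M, c * s := by rw [intervalIntegral.integral_const_mul, integral_id]
    _ ≤ Fprim f a + ∫ s in a..M, f s := by
        gcongr
        exact intervalIntegral.integral_mono_on_of_le_Ioo haM
          (Continuous.intervalIntegrable (by fun_prop) _ _) haf h
    _ = Fprim f M := intervalIntegral.integral_add_adjacent_intervals hfa haf

lemma tendsto_Fprim_div_sq_atTop_s16 (hf : ∀ M, 0 < M → IntervalIntegrable f volume 0 M)
    (hlim : Tendsto (fun s => f s / s) atTop atTop) :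
    Tendsto (fun M => Fprim f M / M ^ 2) atTop atTop := by
  refine tendsto_atTop.2 fun b => ?_
  obtain ⟨a, hquot, ha⟩ : ∃ a, (∀ s ≥ a, 2 * (b + 1) ≤ f s / s) ∧ 0 < a := by
    obtain ⟨a, ha⟩ := eventually_atTop.1 (tendsto_atTop.1 hlim (2 * (b + 1)))
    exact ⟨max a 1, fun s hs => ha s ((le_max_left a 1).trans hs),
      zero_lt_one.trans_le (le_max_right a 1)⟩
  filter_upwards [eventually_ge_atTop a, (tendsto_pow_atTop two_ne_zero).eventually_ge_atTop
    ((b + 1) * a ^ 2 - Fprim f a)] with M haM hMsq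
  have hM : 0 < M := ha.trans_le haM
  have hgrowth := Fprim_add_le_of_mul_le (hf a ha) (hf M hM) haM fun s hs =>
    (le_div_iff₀ (ha.trans hs.1)).1 (hquot s hs.1.le)
  rw [le_div_iff₀ (pow_pos hM 2)]
  linarith

lemma tendsto_div_sqrt_Fprim_atTop (hf : ∀ M, 0 < M → IntervalIntegrable f volume 0 M)
    (hlim : Tendsto (fun s => f s / s) atTop atTop) :
    Tendsto (fun M => M / √(Fprim f M)) atTop (𝓝 0) := by
  refine (Real.tendsto_sqrt_atTop.comp
    (tendsto_Fprim_div_sq_atTop_s16 hf hlim)).inv_tendsto_atTop.congr' ?_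
  filter_upwards [eventually_gt_atTop 0] with M hM
  rw [Pi.inv_apply, Function.comp_apply, Real.sqrt_div' _ (sq_nonneg M), Real.sqrt_sq hM.le,
    inv_div]

lemma eventually_Fprim_pos (hf : ∀ M, 0 < M → IntervalIntegrable f volume 0 M)
    (hlim : Tendsto (fun s => f s / s) atTop atTop) : ∀ᶠ M in atTop, 0 < Fprim f M := by
  filter_upwards [eventually_gt_atTop 0,
    (tendsto_Fprim_div_sq_atTop_s16 hf hlim).eventually_gt_atTop 0] with M hM hpos
  exact (div_pos_iff_of_pos_right (pow_pos hM 2)).1 hpos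

end Primitive

section VpotTimeMap

variable {f : ℝ → ℝ} {lambda M : ℝ}

lemma timeMap_Vpot_nonneg (hf : IntervalIntegrable f volume 0 M)
    (hmono : MonotoneOn (fun s => f s / s) (Ioi 0)) (hM : 0 ≤ M) (hV : 0 ≤ Vpot f lambda M) :
    0 ≤ timeMap (Vpot f lambda) M :=
  timeMap_nonneg hM fun _ hs => le_of_le_sq_mul hV hs (Vpot_le_sq_mul hf hmono lambda hs)

lemma intervalIntegrable_and_timeMap_Vpot_le (hf : IntervalIntegrable f volume 0 M)
    (hmono : MonotoneOn (fun s => f s / s) (Ioi 0)) (hM : 0 < M) (hV : 0 < Vpot f lambda M) :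
    IntervalIntegrable (fun s => (Vpot f lambda M - Vpot f lambda s) ^ (-(1 / 2) : ℝ))
        volume 0 M ∧
      timeMap (Vpot f lambda) M ≤ Real.pi / 2 * M / √(Vpot f lambda M) := by
  have hcont : ContinuousOn (Vpot f lambda) (Ioo 0 M) :=
    (continuousOn_Vpot hf lambda).mono (Ioo_subset_Icc_self.trans Icc_subset_uIcc)
  have hscale : ∀ s ∈ Ioo 0 M, Vpot f lambda s ≤ (s / M) ^ 2 * Vpot f lambda M :=
    fun s hs => Vpot_le_sq_mul hf hmono lambda (Ioo_subset_Icc_self hs)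
  exact ⟨intervalIntegrable_rpow_sub_of_le_sq_mul hM hV hcont hscale,
    timeMap_le_of_le_sq_mul hM hV hcont hscale⟩

lemma div_sqrt_Vpot_le_div_sqrt_Fprim (hl : 0 ≤ lambda) (hM : 0 ≤ M) (hF : 0 < Fprim f M) :
    Real.pi / 2 * M / √(Vpot f lambda M) ≤ Real.pi / 2 * M / √(Fprim f M) := by
  gcongr
  exact Fprim_le_Vpot hl M

lemma sSup_timeMap_Vpot_mem_Icc (hf : IntervalIntegrable f volume 0 M)
    (hmono : MonotoneOn (fun s => f s / s) (Ioi 0)) (hM : 0 < M) (hF : 0 < Fprim f M) :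
    sSup ((fun lambda => timeMap (Vpot f lambda) M) '' Ici 0) ∈
      Icc 0 (Real.pi / 2 * M / √(Fprim f M)) := by
  have hV {lambda : ℝ} (hl : 0 ≤ lambda) : 0 < Vpot f lambda M :=
    hF.trans_le (Fprim_le_Vpot hl M)
  constructor
  · exact Real.sSup_nonneg <| forall_mem_image.2 fun lambda hl =>
      timeMap_Vpot_nonneg hf hmono hM.le (hV hl).le
  · refine Real.sSup_le (forall_mem_image.2 fun lambda hl => ?_) (by positivity)
    exact (intervalIntegrable_and_timeMap_Vpot_le hf hmono hM (hV hl)).2.trans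
      (div_sqrt_Vpot_le_div_sqrt_Fprim hl hM.le hF)

end VpotTimeMap

section F1Cond

variable {f : ℝ → ℝ}

lemma F1Cond.monotoneOn_div (h : F1Cond f) : MonotoneOn (fun s => f s / s) (Ioi 0) :=
  (h.1.monotoneOn.mono fun _ hs => ne_of_gt hs).congr fun s hs => by
    simp only [abs_of_pos (mem_Ioi.1 hs)]

lemma F1Cond.tendsto_div_atTop (h : F1Cond f) : Tendsto (fun s => f s / s) atTop atTop :=
  h.2.2.1.congr' <| (eventually_gt_atTop 0).mono fun s hs => by simp only [abs_of_pos hs]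

lemma F1Cond.pos_s16 (h : F1Cond f) {s : ℝ} (hs : 0 < s) : 0 < f s := by
  obtain ⟨hmono, hzero, -, -⟩ := h
  have hhalf : 0 < s / 2 := half_pos hs
  have hnonneg : 0 ≤ f (s / 2) / |s / 2| := by
    refine le_of_tendsto (hzero.mono_left (nhdsGT_le_nhdsNE 0)) ?_
    filter_upwards [Ioo_mem_nhdsGT hhalf] with t ht
    exact (hmono ht.1.ne' hhalf.ne' ht.2).le
  have hquot : 0 < f s / |s| :=
    hnonneg.trans_lt (hmono hhalf.ne' hs.ne' (half_lt_self hs))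
  exact (div_pos_iff_of_pos_right (abs_pos.2 hs.ne')).1 hquot

lemma F1Cond.Fprim_pos (h : F1Cond f) {M : ℝ} (hf : IntervalIntegrable f volume 0 M)
    (hM : 0 < M) : 0 < Fprim f M :=
  intervalIntegral.intervalIntegral_pos_of_pos_on hf (fun _ hs => h.pos_s16 hs.1) hM

end F1Cond

theorem time_in_potential_well_estimate_general (f : ℝ → ℝ)
    (hf : ∀ M, 0 < M → IntervalIntegrable f volume 0 M)
    (hmono : MonotoneOn (fun s => f s / s) (Ioi 0))
    (hlim : Tendsto (fun s => f s / s) atTop atTop) :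
    (∀ lambda M : ℝ, 0 < M → 0 < Vpot f lambda M →
      IntervalIntegrable
        (fun s => (Vpot f lambda M - Vpot f lambda s) ^ (-(1 / 2) : ℝ)) volume 0 M ∧
      timeMap (Vpot f lambda) M ≤ Real.pi / 2 * M / √(Vpot f lambda M)) ∧
    Tendsto (fun M => sSup ((fun lambda => timeMap (Vpot f lambda) M) '' Ici 0)) atTop (𝓝 0) := by
  refine ⟨fun _ M hM hV => intervalIntegrable_and_timeMap_Vpot_le (hf M hM) hmono hM hV, ?_⟩
  have hbound : Tendsto (fun M => Real.pi / 2 * M / √(Fprim f M)) atTop (𝓝 0) := by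
    simpa only [mul_div_assoc, mul_zero] using
      (tendsto_div_sqrt_Fprim_atTop hf hlim).const_mul (Real.pi / 2)
  have hmem : ∀ᶠ M in atTop, sSup ((fun lambda => timeMap (Vpot f lambda) M) '' Ici 0) ∈
      Icc 0 (Real.pi / 2 * M / √(Fprim f M)) := by
    filter_upwards [eventually_gt_atTop 0, eventually_Fprim_pos hf hlim] with M hM hF
    exact sSup_timeMap_Vpot_mem_Icc (hf M hM) hmono hM hF
  exact tendsto_of_tendsto_of_tendsto_of_le_of_le' tendsto_const_nhds hbound
    (hmem.mono fun _ h => h.1) (hmem.mono fun _ h => h.2)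

/-- Under (f1), for every `λ ≥ 0` and `M > 0` the improper integral
`∫₀^M (V_λ(M) − V_λ(u))^{−1/2} du` is finite, bounded by `(π/2) M / √(F(M))`, and the
supremum over `λ ≥ 0` tends to `0` as `M → +∞`. -/
theorem time_in_potential_well_estimate (f : ℝ → ℝ) (hf : Continuous f)
    (hf1 : F1Cond f) :
    (∀ lambda : ℝ, 0 ≤ lambda → ∀ M : ℝ, 0 < M →
      IntervalIntegrable
        (fun s => (Vpot f lambda M - Vpot f lambda s) ^ (-(1 / 2) : ℝ)) volume 0 M ∧
      (∫ s in (0 : ℝ)..M, (Vpot f lambda M - Vpot f lambda s) ^ (-(1 / 2) : ℝ)) ≤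
        Real.pi / 2 * M / Real.sqrt (Fprim f M)) ∧
    Tendsto
      (fun M : ℝ => sSup ((fun lambda : ℝ =>
        ∫ s in (0 : ℝ)..M, (Vpot f lambda M - Vpot f lambda s) ^ (-(1 / 2) : ℝ)) '' Ici 0))
      atTop (𝓝 0) := by
  obtain ⟨hbound, hlimit⟩ := time_in_potential_well_estimate_general f
    (fun M _ => hf.intervalIntegrable 0 M) hf1.monotoneOn_div hf1.tendsto_div_atTop
  refine ⟨fun lambda hl M hM => ?_, hlimit⟩
  have hF : 0 < Fprim f M := hf1.Fprim_pos (hf.intervalIntegrable 0 M) hM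
  exact (hbound lambda M hM (hF.trans_le (Fprim_le_Vpot hl M))).imp_right
    fun hle => hle.trans (div_sqrt_Vpot_le_div_sqrt_Fprim hl hM.le hF)
end

section
/- Let (Ω, μ) be a measure space, let f : ℝ → ℝ satisfy f(t) > 0 for all t > 0 and f(0) = 0, and let λ_i ≤ λ be real numbers. Then there exist no measurable functions u, ξ : Ω → ℝ such that: ξ > 0 almost everywhere; u ≥ 0 almost everywhere and u is not almost everywhere equal to 0; the functions u·ξ and f(u)·ξ are μ-integrable; and ∫_Ω (λ u + f(u)) ξ dμ = λ_i ∫_Ω u ξ dμ. (This is the weak formulation showing that the equation A u = λ u + f(u) has no nontrivial nonnegative solution for λ ≥ λ_i when A admits an almost everywhere positive eigenfunction ξ with eigenvalue λ_i.) -/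
open Filter Topology Set MeasureTheory

theorem eventually_comp_nonneg {Ω α β : Type*} [PartialOrder α] [Zero α] [Preorder β] [Zero β]
    {l : Filter Ω} {f : Ω → α → β} {u : Ω → α} (hf_pos : ∀ᶠ x in l, ∀ t, 0 < t → 0 < f x t)
    (hf_zero : ∀ᶠ x in l, 0 ≤ f x 0) (hu : ∀ᶠ x in l, 0 ≤ u x) :
    ∀ᶠ x in l, 0 ≤ f x (u x) := by
  filter_upwards [hf_pos, hf_zero, hu] with x hx_pos hx_zero hux
  rcases hux.eq_or_lt with h | h
  · rwa [← h]
  · exact (hx_pos _ h).le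

theorem eventuallyEq_zero_of_comp_eventuallyEq_zero {Ω α β : Type*} [PartialOrder α] [Zero α]
    [Preorder β] [Zero β] {l : Filter Ω} {f : Ω → α → β} {u : Ω → α}
    (hf_pos : ∀ᶠ x in l, ∀ t, 0 < t → 0 < f x t) (hu : ∀ᶠ x in l, 0 ≤ u x)
    (hfu : (fun x => f x (u x)) =ᶠ[l] 0) : u =ᶠ[l] 0 := by
  filter_upwards [hf_pos, hu, hfu] with x hx_pos hux hfux
  by_contra hne
  exact (hx_pos _ (hux.lt_of_ne' hne)).ne' hfux

theorem integral_const_mul_add_mul {Ω 𝕜 : Type*} [MeasurableSpace Ω] {μ : Measure Ω} [RCLike 𝕜]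
    {u v ξ : Ω → 𝕜} (c : 𝕜) (hu : Integrable (fun x => u x * ξ x) μ)
    (hv : Integrable (fun x => v x * ξ x) μ) :
    ∫ x, (c * u x + v x) * ξ x ∂μ = c * ∫ x, u x * ξ x ∂μ + ∫ x, v x * ξ x ∂μ := by
  simp_rw [add_mul, mul_assoc]
  rw [integral_add (hu.const_mul c) hv, integral_const_mul]

section Positivity

variable {Ω : Type*} [MeasurableSpace Ω] {μ : Measure Ω}

theorem integral_mul_pos_of_ae_pos {g ξ : Ω → ℝ} (hξ : ∀ᵐ x ∂μ, 0 < ξ x)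
    (hg : ∀ᵐ x ∂μ, 0 ≤ g x) (hg_ne : ¬ g =ᵐ[μ] 0)
    (hgξ : Integrable (fun x => g x * ξ x) μ) : 0 < ∫ x, g x * ξ x ∂μ := by
  have hgξ_nonneg : 0 ≤ᵐ[μ] fun x => g x * ξ x := by
    filter_upwards [hξ, hg] with x hξx hgx using mul_nonneg hgx hξx.le
  refine (integral_nonneg_of_ae hgξ_nonneg).lt_of_ne' fun h_zero => hg_ne ?_
  filter_upwards [hξ, (integral_eq_zero_iff_of_nonneg_ae hgξ_nonneg hgξ).1 h_zero] with x hξx hx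
  exact (mul_eq_zero_iff_right hξx.ne').1 hx

theorem no_nonneg_solution_above_positive_eigenfunction_general {f : Ω → ℝ → ℝ} {u ξ : Ω → ℝ}
    {lami lambda : ℝ} (hf_pos : ∀ᵐ x ∂μ, ∀ t, 0 < t → 0 < f x t) (hf_zero : ∀ᵐ x ∂μ, 0 ≤ f x 0)
    (hle : lami ≤ lambda) (hξ : ∀ᵐ x ∂μ, 0 < ξ x) (hu : ∀ᵐ x ∂μ, 0 ≤ u x) (hu_ne : ¬ u =ᵐ[μ] 0)
    (huξ : Integrable (fun x => u x * ξ x) μ)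
    (hfξ : Integrable (fun x => f x (u x) * ξ x) μ) :
    lami * ∫ x, u x * ξ x ∂μ < ∫ x, (lambda * u x + f x (u x)) * ξ x ∂μ := by
  have hf_nonneg : ∀ᵐ x ∂μ, 0 ≤ f x (u x) := eventually_comp_nonneg hf_pos hf_zero hu
  have hf_ne : ¬ (fun x => f x (u x)) =ᵐ[μ] 0 :=
    mt (eventuallyEq_zero_of_comp_eventuallyEq_zero hf_pos hu) hu_ne
  have huξ_pos : 0 < ∫ x, u x * ξ x ∂μ := integral_mul_pos_of_ae_pos hξ hu hu_ne huξ
  have hfξ_pos : 0 < ∫ x, f x (u x) * ξ x ∂μ :=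
    integral_mul_pos_of_ae_pos hξ hf_nonneg hf_ne hfξ
  calc lami * ∫ x, u x * ξ x ∂μ
      ≤ lambda * ∫ x, u x * ξ x ∂μ := mul_le_mul_of_nonneg_right hle huξ_pos.le
    _ < lambda * ∫ x, u x * ξ x ∂μ + ∫ x, f x (u x) * ξ x ∂μ := lt_add_of_pos_right _ hfξ_pos
    _ = ∫ x, (lambda * u x + f x (u x)) * ξ x ∂μ :=
      (integral_const_mul_add_mul lambda huξ hfξ).symm

end Positivity

/-- If `f(t) > 0` for `t > 0`, `f(0) = 0` and `λ ≥ λᵢ`, then there is no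
measurable pair `(u, ξ)` with `ξ > 0` a.e., `u ≥ 0` a.e. and `u` not a.e. zero, such that
`u ξ` and `f(u) ξ` are integrable and `∫ (λ u + f(u)) ξ dμ = λᵢ ∫ u ξ dμ`
(no nontrivial nonnegative solution of `Au = λu + f(u)` tested against an a.e. positive
eigenfunction `ξ` of eigenvalue `λᵢ`). -/
theorem no_nonneg_solution_above_positive_eigenfunction
    {Ω : Type*} [MeasurableSpace Ω] (μ : Measure Ω)
    (f : ℝ → ℝ) (hfpos : ∀ t : ℝ, 0 < t → 0 < f t) (hf0 : f 0 = 0)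
    (lami lambda : ℝ) (hle : lami ≤ lambda) :
    ¬ ∃ (u ξ : Ω → ℝ), Measurable u ∧ Measurable ξ ∧
      (∀ᵐ x ∂μ, 0 < ξ x) ∧ (∀ᵐ x ∂μ, 0 ≤ u x) ∧
      ¬ (u =ᵐ[μ] (fun _ => 0)) ∧
      Integrable (fun x => u x * ξ x) μ ∧
      Integrable (fun x => f (u x) * ξ x) μ ∧
      (∫ x, (lambda * u x + f (u x)) * ξ x ∂μ) = lami * ∫ x, u x * ξ x ∂μ := by
  rintro ⟨u, ξ, -, -, hξ, hu, hu_ne, huξ, hfξ, h_eq⟩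
  exact (no_nonneg_solution_above_positive_eigenfunction_general (f := fun _ => f)
    (ae_of_all μ fun _ => hfpos) (ae_of_all μ fun _ => hf0.ge) hle hξ hu hu_ne huξ hfξ).ne' h_eq
end

section
/- For every ε ∈ (0, 1/2) and every integer ℓ ≥ 1, the series ∑_{j = ℓ²+1}^{∞} j^ε / (j² − (ℓ²−1)²) converges and satisfies ∑_{j = ℓ²+1}^{∞} j^ε / (j² − (ℓ²−1)²) ≤ (3/ε) · (2ℓ² + 1)^{(3ε/2) − 1}. -/
open Filter Topology Set

/-!
With `M = ℓ² - 1` and `x = j`, factor `x² - M² = (x - M)(x + M)`. Since `x ≤ x + M` and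
`x - M ≤ x + M`, one may trade `x ^ ε` against a power of `x + M` and, for any `s ≥ 0`, move the
factor `(x + M) ^ (-s)` onto `x - M`:
`x ^ ε / (x² - M²) ≤ (x - M) ^ (-1 - s) * (x + M) ^ (ε + s - 1)`.
If `s > 0` and `ε + s ≤ 1`, the first factor is summable, with sum at most `1 / s` by the integral
test because `x - M` runs through `2, 3, …`, and the second is largest at the first term, where
`x + M = 2ℓ²`. The choice `s = ε / 2` gives `(2 / ε) (2ℓ²) ^ (3ε/2 - 1)`, and replacing `2ℓ²` by
`2ℓ² + 1 ≤ (3/2) 2ℓ²` costs at most a factor `3/2`.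
-/

lemma rpow_le_mul_rpow_of_le_mul {x y c p : ℝ} (hx : 0 < x) (hy : 0 < y) (hc : 1 ≤ c)
    (hyx : y ≤ c * x) (hp₁ : -1 ≤ p) (hp₀ : p ≤ 0) : x ^ p ≤ c * y ^ p := by
  have hc₀ : 0 < c := by linarith
  calc x ^ p = c * (c ^ (-1 : ℝ) * x ^ p) := by
        rw [Real.rpow_neg_one, mul_inv_cancel_left₀ hc₀.ne']
    _ ≤ c * (c ^ p * x ^ p) := by gcongr
    _ = c * (c * x) ^ p := by rw [Real.mul_rpow hc₀.le hx.le]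
    _ ≤ c * y ^ p := by gcongr c * ?_; exact Real.rpow_le_rpow_of_nonpos hy hyx hp₀

section PowerTail

variable {p : ℝ}

lemma summable_nat_add_rpow (hp : p < -1) (N : ℕ) :
    Summable fun n : ℕ ↦ ((n + N : ℕ) : ℝ) ^ p :=
  (summable_nat_add_iff N).2 (Real.summable_nat_rpow.2 hp)

lemma tsum_nat_add_rpow_le (hp : p < -1) {N : ℕ} (hN : 0 < N) :
    ∑' n : ℕ, ((n + N + 1 : ℕ) : ℝ) ^ p ≤ -(N : ℝ) ^ (p + 1) / (p + 1) := by
  have hN' : (0 : ℝ) < N := Nat.cast_pos.2 hN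
  have hanti : AntitoneOn (fun x : ℝ ↦ x ^ p) (Ici (N : ℝ)) :=
    (Real.antitoneOn_rpow_Ioi_of_exponent_nonpos (by linarith)).mono (Ici_subset_Ioi.2 hN')
  rw [← integral_Ioi_rpow_of_lt hp hN']
  exact hanti.tsum_comp_add_le_integral N (integrableOn_Ioi_rpow_of_lt hp hN')
    fun x hx ↦ Real.rpow_nonneg (hN'.trans hx).le p

end PowerTail

section SquareDifference

variable {ε s M : ℝ}

lemma rpow_div_sq_sub_sq_nonneg {x : ℝ} (hM : 0 ≤ M) (hx : M ≤ x) :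
    0 ≤ x ^ ε / (x ^ 2 - M ^ 2) :=
  div_nonneg (Real.rpow_nonneg (hM.trans hx) ε) (sub_nonneg.2 (by gcongr))

lemma rpow_div_sq_sub_sq_le {x : ℝ} (hε : 0 ≤ ε) (hs : 0 ≤ s) (hM : 0 ≤ M) (hx : M < x) :
    x ^ ε / (x ^ 2 - M ^ 2) ≤ (x - M) ^ (-1 - s) * (x + M) ^ (ε + s - 1) := by
  have hsub : 0 < x - M := sub_pos.2 hx
  have hadd : 0 < x + M := by linarith
  have hshift : (x + M) ^ (-s) ≤ (x - M) ^ (-s) :=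
    Real.rpow_le_rpow_of_nonpos hsub (by linarith) (by linarith)
  have hsplit : (x + M) ^ ε = (x + M) ^ (-s) * (x + M) ^ (ε + s - 1) * (x + M) := by
    rw [← Real.rpow_add hadd, ← Real.rpow_add_one hadd.ne']
    ring_nf
  calc x ^ ε / (x ^ 2 - M ^ 2) = x ^ ε / ((x - M) * (x + M)) := by congr 1; ring
    _ ≤ (x + M) ^ ε / ((x - M) * (x + M)) := by
        gcongr <;> linarith
    _ = (x + M) ^ (-s) / (x - M) * (x + M) ^ (ε + s - 1) := by
        rw [hsplit]
        field_simp
    _ ≤ (x - M) ^ (-s) / (x - M) * (x + M) ^ (ε + s - 1) := by gcongr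
    _ = (x - M) ^ (-1 - s) * (x + M) ^ (ε + s - 1) := by
        rw [← Real.rpow_sub_one hsub.ne', neg_sub_comm]

lemma rpow_div_sq_sub_sq_le_of_le {x b : ℝ} (hε : 0 ≤ ε) (hs : 0 ≤ s) (hεs : ε + s ≤ 1)
    (hM : 0 ≤ M) (hx : M < x) (hb : 0 < b) (hbx : b ≤ x + M) :
    x ^ ε / (x ^ 2 - M ^ 2) ≤ (x - M) ^ (-1 - s) * b ^ (ε + s - 1) :=
  (rpow_div_sq_sub_sq_le hε hs hM hx).trans <|
    mul_le_mul_of_nonneg_left (Real.rpow_le_rpow_of_nonpos hb hbx (by linarith))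
      (Real.rpow_nonneg (sub_pos.2 hx).le _)

lemma summable_rpow_div_sq_sub_sq (hε : 0 ≤ ε) (hε₁ : ε < 1) (hM : 0 ≤ M) (N : ℕ) :
    Summable fun n : ℕ ↦
      (((n + N + 1 : ℕ) : ℝ) + M) ^ ε / ((((n + N + 1 : ℕ) : ℝ) + M) ^ 2 - M ^ 2) := by
  refine Summable.of_nonneg_of_le (fun n ↦ rpow_div_sq_sub_sq_nonneg hM ?_) (fun n ↦ ?_)
    (summable_nat_add_rpow (p := -1 - (1 - ε)) (by linarith) (N + 1))
  · exact le_add_of_nonneg_left (Nat.cast_nonneg _)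
  · have hpos : (0 : ℝ) < (n + N + 1 : ℕ) := by positivity
    simpa only [add_sub_cancel, add_sub_cancel_right, sub_self, Real.rpow_zero, mul_one,
      ← Nat.add_assoc] using
      rpow_div_sq_sub_sq_le (s := 1 - ε) hε (sub_nonneg.2 hε₁.le) hM (lt_add_of_pos_left M hpos)

lemma tsum_rpow_div_sq_sub_sq_le (hε : 0 ≤ ε) (hs : 0 < s) (hεs : ε + s ≤ 1) (hM : 0 ≤ M)
    {N : ℕ} (hN : 0 < N) :
    ∑' n : ℕ, (((n + N + 1 : ℕ) : ℝ) + M) ^ ε / ((((n + N + 1 : ℕ) : ℝ) + M) ^ 2 - M ^ 2) ≤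
      (N : ℝ) ^ (-s) / s * (N + 1 + 2 * M) ^ (ε + s - 1) := by
  set B : ℝ := (N + 1 + 2 * M) ^ (ε + s - 1)
  have hterm (n : ℕ) :
      (((n + N + 1 : ℕ) : ℝ) + M) ^ ε / ((((n + N + 1 : ℕ) : ℝ) + M) ^ 2 - M ^ 2) ≤
        ((n + N + 1 : ℕ) : ℝ) ^ (-1 - s) * B := by
    have hpos : (0 : ℝ) < (n + N + 1 : ℕ) := by positivity
    have hfirst : (N : ℝ) + 1 + 2 * M ≤ (n + N + 1 : ℕ) + M + M := by
      push_cast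
      linarith [n.cast_nonneg (α := ℝ)]
    simpa only [add_sub_cancel_right] using rpow_div_sq_sub_sq_le_of_le hε hs.le hεs hM
      (lt_add_of_pos_left M hpos) (by positivity) hfirst
  have hpow : Summable fun n : ℕ ↦ ((n + N + 1 : ℕ) : ℝ) ^ (-1 - s) :=
    summable_nat_add_rpow (by linarith) (N + 1)
  calc _ ≤ ∑' n : ℕ, ((n + N + 1 : ℕ) : ℝ) ^ (-1 - s) * B :=
        (summable_rpow_div_sq_sub_sq hε (by linarith) hM N).tsum_le_tsum hterm (hpow.mul_right B)
    _ = (∑' n : ℕ, ((n + N + 1 : ℕ) : ℝ) ^ (-1 - s)) * B := tsum_mul_right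
    _ ≤ -(N : ℝ) ^ (-1 - s + 1) / (-1 - s + 1) * B := by
        gcongr
        exact tsum_nat_add_rpow_le (by linarith) hN
    _ = (N : ℝ) ^ (-s) / s * B := by
        rw [show -1 - s + 1 = -s by ring, neg_div_neg_eq]

end SquareDifference

theorem tail_spectral_sum_estimate_general {ε a : ℝ} (hε : ε ∈ Ioc (0 : ℝ) (2 / 3))
    (ha : 1 ≤ a) :
    Summable (fun j : ℕ ↦ ((j : ℝ) + a + 1) ^ ε / (((j : ℝ) + a + 1) ^ 2 - (a - 1) ^ 2)) ∧
      ∑' j : ℕ, ((j : ℝ) + a + 1) ^ ε / (((j : ℝ) + a + 1) ^ 2 - (a - 1) ^ 2) ≤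
        3 / ε * (2 * a + 1) ^ (3 * ε / 2 - 1) := by
  obtain ⟨hε₀, hε₁⟩ := hε
  have hM : 0 ≤ a - 1 := sub_nonneg.2 ha
  have hindex (j : ℕ) : (j : ℝ) + a + 1 = (j + 1 + 1 : ℕ) + (a - 1) := by push_cast; ring
  simp only [hindex]
  refine ⟨summable_rpow_div_sq_sub_sq hε₀.le (by linarith) hM 1, ?_⟩
  have hcompare : (2 * a) ^ (3 * ε / 2 - 1) ≤ 3 / 2 * (2 * a + 1) ^ (3 * ε / 2 - 1) :=
    rpow_le_mul_rpow_of_le_mul (by linarith) (by linarith) (by norm_num) (by linarith)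
      (by linarith) (by linarith)
  calc _ ≤ ((1 : ℕ) : ℝ) ^ (-(ε / 2)) / (ε / 2) *
          ((1 : ℕ) + 1 + 2 * (a - 1)) ^ (ε + ε / 2 - 1) :=
        tsum_rpow_div_sq_sub_sq_le hε₀.le (half_pos hε₀) (by linarith) hM one_pos
    _ = 2 / ε * (2 * a) ^ (3 * ε / 2 - 1) := by
        rw [Nat.cast_one, Real.one_rpow, one_div_div]
        ring_nf
    _ ≤ 2 / ε * (3 / 2 * (2 * a + 1) ^ (3 * ε / 2 - 1)) := by gcongr
    _ = 3 / ε * (2 * a + 1) ^ (3 * ε / 2 - 1) := by ring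

/-- For `ε ∈ (0, 1/2)` and `ℓ ≥ 1`, the series
`∑_{j = ℓ²+1}^∞ j^ε / (j² − (ℓ²−1)²)` converges and is at most
`(3/ε) (2ℓ² + 1)^{3ε/2 − 1}`. -/
theorem tail_spectral_sum_estimate :
    ∀ ε : ℝ, ε ∈ Ioo (0 : ℝ) (1 / 2) → ∀ ℓ : ℕ, 1 ≤ ℓ →
      Summable (fun j : ℕ =>
        ((j + ℓ ^ 2 + 1 : ℕ) : ℝ) ^ ε /
          (((j + ℓ ^ 2 + 1 : ℕ) : ℝ) ^ 2 - ((ℓ : ℝ) ^ 2 - 1) ^ 2)) ∧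
      (∑' j : ℕ,
        ((j + ℓ ^ 2 + 1 : ℕ) : ℝ) ^ ε /
          (((j + ℓ ^ 2 + 1 : ℕ) : ℝ) ^ 2 - ((ℓ : ℝ) ^ 2 - 1) ^ 2)) ≤
        3 / ε * (2 * (ℓ : ℝ) ^ 2 + 1) ^ (3 * ε / 2 - 1) := by
  intro ε hε ℓ hℓ
  exact_mod_cast tail_spectral_sum_estimate_general (a := (ℓ : ℝ) ^ 2)
    ⟨hε.1, by linarith [hε.2]⟩ (one_le_pow₀ (Nat.one_le_cast.2 hℓ))
end
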